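/- Let K be an infinite field, S = K[x_1,...,x_n], and fix an integer j. Let I ⊆ S and J ⊆ S be homogeneous ideals and let w, w' ∈ Z_{≥0}^n be weight vectors. Then for a general change of coordinates g ∈ GL_n(K), one has dim_K Tor_i^S(S/I, S/g(J))_j ≤ dim_K Tor_i^S(S/in_w(I), S/in_{w'}(J))_j for all i ≥ 0. -/

import Mathlib

open MvPolynomial TensorProduct CategoryTheory

noncomputable section

/-- The polynomial ring `S = K[x_1,...,x_n]`, standard graded. -/
abbrev PS (K : Type) [Field K] (n : ℕ) : Type := MvPolynomial (Fin n) K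

variable (K : Type) [Field K] (n : ℕ)

/-- An ideal of `S` is homogeneous if it contains all homogeneous components of its
elements. -/
def IsHomog (I : Ideal (PS K n)) : Prop :=
  ∀ f ∈ I, ∀ d : ℕ, MvPolynomial.homogeneousComponent d f ∈ I

/-- The change of coordinates of `S` induced by `g ∈ GL_n(K)`, determined by
`g(x_i) = ∑_j g_{ji} x_j`. -/
def coordChange (g : GL (Fin n) K) : PS K n →ₐ[K] PS K n :=
  MvPolynomial.aeval (fun i => ∑ j, ((g : Matrix (Fin n) (Fin n) K) j i) • MvPolynomial.X j)

/-- A property `P` holds for a general change of coordinates `g ∈ GL_n(K)` if there is a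
nonempty Zariski open subset `U ⊆ GL_n(K)` on which it holds; equivalently (as `GL_n(K)` is
an irreducible variety over the infinite field `K`) there is a nonzero polynomial `F` in the
matrix entries such that `P g` holds whenever `F` does not vanish at `g`. -/
def generally (P : GL (Fin n) K → Prop) : Prop :=
  ∃ F : MvPolynomial (Fin n × Fin n) K, F ≠ 0 ∧
    ∀ g : GL (Fin n) K,
      MvPolynomial.eval (fun p => (g : Matrix (Fin n) (Fin n) K) p.1 p.2) F ≠ 0 → P g

/-- The standard grading of `S = K[x_1,...,x_n]`, extended to `ℤ` (zero in negative
degrees). -/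
def polyGrade (d : ℤ) : Submodule K (PS K n) :=
  if 0 ≤ d then homogeneousSubmodule (Fin n) K d.toNat else ⊥

/-- The degree `d` component of the (internal) tensor-product grading on `A ⊗[K] B`. -/
def tensorGrade {A B : Type} [AddCommGroup A] [Module K A] [AddCommGroup B] [Module K B]
    (GA : ℤ → Submodule K A) (GB : ℤ → Submodule K B) (d : ℤ) :
    Submodule K (A ⊗[K] B) :=
  ⨆ p : ℤ, LinearMap.range (TensorProduct.map (GA p).subtype (GB (d - p)).subtype)

variable (N : Type) [AddCommGroup N] [Module K N] [Module (PS K n) N]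
  [IsScalarTower K (PS K n) N]

/-- The tower of `K`-vector spaces `D_i = S^{⊗ i} ⊗_K N` appearing in the bar complex
`M ⊗_K S^{⊗ i} ⊗_K N`, which computes `Tor^S_i(M, N)`. -/
def barD : ℕ → ModuleCat K
  | 0 => ModuleCat.of K N
  | (i + 1) => ModuleCat.of K (PS K n ⊗[K] (barD i))

/-- The internal `ℤ`-grading on `D_i = S^{⊗ i} ⊗_K N` induced by the standard grading of
`S` and a grading `GN` of `N`. -/
def barDGrade (GN : ℤ → Submodule K N) : (i : ℕ) → ℤ → Submodule K (barD K n N i)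
  | 0 => GN
  | (i + 1) => tensorGrade K (polyGrade K n) (barDGrade GN i)

/-- Scalar multiplication `S → N → N` as a `K`-bilinear map. -/
def smulBilin : PS K n →ₗ[K] N →ₗ[K] N :=
  LinearMap.mk₂ K (fun s x => s • x)
    (fun s₁ s₂ x => add_smul s₁ s₂ x)
    (fun c s x => smul_assoc c s x)
    (fun s x y => smul_add s x y)
    (fun c s x => (smul_comm c s x).symm)

/-- The "contraction" part of the bar differential, `c_i : D_{i+1} → D_i`, defined
recursively by `c_0(s ⊗ x) = s • x` and
`c_{i+1}(s ⊗ s' ⊗ t) = (s s') ⊗ t - s ⊗ c_i(s' ⊗ t)`. -/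
def barC : (i : ℕ) → ((barD K n N (i + 1)) →ₗ[K] (barD K n N i))
  | 0 => TensorProduct.lift (smulBilin K n N)
  | (i + 1) =>
      (TensorProduct.map (LinearMap.mul' K (PS K n)) LinearMap.id).comp
        (TensorProduct.assoc K (PS K n) (PS K n) (barD K n N i)).symm.toLinearMap
      - TensorProduct.map LinearMap.id (barC i)

variable (M : Type) [AddCommGroup M] [Module K M] [Module (PS K n) M]
  [IsScalarTower K (PS K n) M]

/-- Right scalar multiplication `M ⊗[K] S → M` as a `K`-linear map. -/
def smulMapM : M ⊗[K] PS K n →ₗ[K] M :=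
  TensorProduct.lift (LinearMap.mk₂ K (fun m s => s • m)
    (fun m₁ m₂ s => smul_add s m₁ m₂)
    (fun c m s => smul_comm s c m)
    (fun m s₁ s₂ => add_smul s₁ s₂ m)
    (fun c m s => smul_assoc c s m))

/-- The bar differential `b_i : M ⊗ D_{i+1} → M ⊗ D_i`,
`b(m ⊗ s ⊗ t) = (s • m) ⊗ t - m ⊗ c_i(s ⊗ t)`.  The complex
`⋯ → M ⊗_K S^{⊗ i} ⊗_K N → ⋯ → M ⊗_K S ⊗_K N → M ⊗_K N → 0`
is the bar complex `M ⊗_S Bar(S, N)`, whose `i`-th homology is `Tor^S_i(M, N)`;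
it is a complex of graded vector spaces with degree-preserving differentials. -/
def barB (i : ℕ) : (M ⊗[K] (barD K n N (i + 1))) →ₗ[K] (M ⊗[K] (barD K n N i)) :=
  (TensorProduct.map (smulMapM K n M) LinearMap.id).comp
      (TensorProduct.assoc K M (PS K n) (barD K n N i)).symm.toLinearMap
  - TensorProduct.map LinearMap.id (barC K n N i)

/-- `dim_K Tor_i^S(M, N)_j`, the dimension of the degree-`j` component of the graded module
`Tor_i^S(M, N)` for graded modules `M`, `N`: it is computed as the homology of the degree-`j`
strand of the bar complex, namely `dim (ker b_i)_j - dim (im b_{i+1})_j`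
(for `i = 0`, `dim (M ⊗_K N)_j - dim (im b_1)_j`). -/
def torStrandDim (GM : ℤ → Submodule K M) (GN : ℤ → Submodule K N) : ℕ → ℤ → ℕ
  | 0, j =>
      Module.finrank K ↥(tensorGrade K GM (barDGrade K n N GN 0) j) -
        Module.finrank K
          ↥(LinearMap.range (barB K n N M 0) ⊓ tensorGrade K GM (barDGrade K n N GN 0) j)
  | (i + 1), j =>
      Module.finrank K
          ↥(LinearMap.ker (barB K n N M i) ⊓
              tensorGrade K GM (barDGrade K n N GN (i + 1)) j) -
        Module.finrank K
          ↥(LinearMap.range (barB K n N M (i + 1)) ⊓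
              tensorGrade K GM (barDGrade K n N GN (i + 1)) j)

/-- The quotient grading on `S/J`. -/
def quotGrade (J : Ideal (PS K n)) : ℤ → Submodule K (PS K n ⧸ J) := fun d =>
  (polyGrade K n d).map (Ideal.Quotient.mkₐ K J).toLinearMap

/-- The grading on an ideal `I ⊆ S` viewed as an `S`-module. -/
def idealGrade (I : Ideal (PS K n)) : ℤ → Submodule K ↥I := fun d =>
  (polyGrade K n d).comap ((Submodule.subtype I).restrictScalars K)

/-- `dim_K Tor_i^S(S/I, S/J)_j`. -/
def torQQ (I J : Ideal (PS K n)) (i : ℕ) (j : ℤ) : ℕ :=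
  torStrandDim K n (PS K n ⧸ J) (PS K n ⧸ I) (quotGrade K n I) (quotGrade K n J) i j

/-- `dim_K Tor_i^S(I, S/J)_j`. -/
def torIQ (I J : Ideal (PS K n)) (i : ℕ) (j : ℤ) : ℕ :=
  torStrandDim K n (PS K n ⧸ J) ↥I (idealGrade K n I) (quotGrade K n J) i j

/-- A property `P` holds for a general (nonzero) scalar `λ ∈ K` if it holds on a nonempty
Zariski open subset of `K`; equivalently, outside the zero set of some nonzero polynomial.
(Since `{0}` is Zariski closed, it is equivalent to quantify over `λ ∈ Kˣ`.) -/
def generallyScalar (P : Kˣ → Prop) : Prop :=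
  ∃ F : Polynomial K, F ≠ 0 ∧ ∀ l : Kˣ, Polynomial.eval (l : K) F ≠ 0 → P l

/-- The diagonal change of coordinates `D_{λ,w} : x_i ↦ λ^{-w_i} x_i`. -/
def diagCoord (w : Fin n → ℕ) (l : Kˣ) : PS K n →ₐ[K] PS K n :=
  MvPolynomial.aeval (fun i => (((l⁻¹ : Kˣ) : K) ^ (w i)) • MvPolynomial.X i)

/-- The `w`-weight of an exponent vector: `∑ w_i m_i`. -/
def wdeg (w : Fin n → ℕ) (m : Fin n →₀ ℕ) : ℕ := ∑ i, w i * m i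

/-- The initial form `in_w(f)`: the sum of the terms of `f` of maximal `w`-weight. -/
def initialForm (w : Fin n → ℕ) (f : PS K n) : PS K n :=
  ∑ m ∈ f.support.filter (fun m => wdeg n w m = f.support.sup (wdeg n w)),
    MvPolynomial.monomial m (MvPolynomial.coeff m f)

/-- The initial ideal `in_w(I)` of `I` with respect to the weight order given by `w`. -/
def initialIdealW (w : Fin n → ℕ) (I : Ideal (PS K n)) : Ideal (PS K n) :=
  Ideal.span {g | ∃ f ∈ I, g = initialForm K n w f}


set_option linter.unusedSectionVars false

section Part1x

section graded

variable {A B A' B' : Type} [AddCommGroup A] [Module K A] [AddCommGroup B] [Module K B]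
  [AddCommGroup A'] [Module K A'] [AddCommGroup B'] [Module K B']

lemma tmul_mem_tensorGrade (GA : ℤ → Submodule K A) (GB : ℤ → Submodule K B) {p q d : ℤ}
    (h : p + q = d) {a : A} {b : B} (ha : a ∈ GA p) (hb : b ∈ GB q) :
    a ⊗ₜ[K] b ∈ tensorGrade K GA GB d := by
  have hq : q = d - p := by omega
  subst hq
  exact Submodule.mem_iSup_of_mem p ⟨(⟨a, ha⟩ : GA p) ⊗ₜ (⟨b, hb⟩ : GB (d - p)), by simp⟩

lemma tensorGrade_le (GA : ℤ → Submodule K A) (GB : ℤ → Submodule K B) (d : ℤ)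
    (U : Submodule K (A ⊗[K] B))
    (h : ∀ p q, p + q = d → ∀ a ∈ GA p, ∀ b ∈ GB q, a ⊗ₜ[K] b ∈ U) :
    tensorGrade K GA GB d ≤ U := by
  refine iSup_le fun p => ?_
  rintro _ ⟨x, rfl⟩
  induction x using TensorProduct.induction_on with
  | zero => simp
  | tmul x y => exact h p (d - p) (by omega) _ x.2 _ y.2
  | add x y hx hy => rw [map_add]; exact U.add_mem hx hy

lemma tensorGrade_mono {GA GA' : ℤ → Submodule K A} {GB GB' : ℤ → Submodule K B}
    (h : ∀ d, GA d ≤ GA' d) (h' : ∀ d, GB d ≤ GB' d) (d : ℤ) :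
    tensorGrade K GA GB d ≤ tensorGrade K GA' GB' d :=
  tensorGrade_le K _ _ _ _ fun _ _ hpq _ ha _ hb =>
    tmul_mem_tensorGrade K _ _ hpq (h _ ha) (h' _ hb)

lemma map_tensorGrade (GA : ℤ → Submodule K A) (GB : ℤ → Submodule K B)
    (f : A →ₗ[K] A') (g : B →ₗ[K] B') (d : ℤ) :
    (tensorGrade K GA GB d).map (TensorProduct.map f g) =
      tensorGrade K (fun p => (GA p).map f) (fun p => (GB p).map g) d := by
  apply le_antisymm
  · rw [Submodule.map_le_iff_le_comap]
    refine tensorGrade_le K _ _ _ _ fun p q hpq a ha b hb => ?_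
    simp only [Submodule.mem_comap, TensorProduct.map_tmul]
    exact tmul_mem_tensorGrade K _ _ hpq (Submodule.mem_map_of_mem ha)
      (Submodule.mem_map_of_mem hb)
  · refine tensorGrade_le K _ _ _ _ ?_
    rintro p q hpq _ ⟨a, ha, rfl⟩ _ ⟨b, hb, rfl⟩
    exact ⟨a ⊗ₜ b, tmul_mem_tensorGrade K _ _ hpq ha hb, by simp⟩

lemma iSup_tensorGrade_mem (GA : ℤ → Submodule K A) (GB : ℤ → Submodule K B)
    {a : A} {b : B} (ha : a ∈ ⨆ d, GA d) (hb : b ∈ ⨆ d, GB d) :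
    a ⊗ₜ[K] b ∈ ⨆ d, tensorGrade K GA GB d := by
  induction ha using Submodule.iSup_induction' with
  | mem p a ha =>
    induction hb using Submodule.iSup_induction' with
    | mem q b hb =>
      exact Submodule.mem_iSup_of_mem (p + q) (tmul_mem_tensorGrade K _ _ rfl ha hb)
    | zero => simp
    | add x y _ _ hx hy => rw [TensorProduct.tmul_add]; exact Submodule.add_mem _ hx hy
  | zero => simp
  | add x y _ _ hx hy => rw [TensorProduct.add_tmul]; exact Submodule.add_mem _ hx hy

lemma iSup_tensorGrade (GA : ℤ → Submodule K A) (GB : ℤ → Submodule K B)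
    (ha : ⨆ d, GA d = ⊤) (hb : ⨆ d, GB d = ⊤) :
    ⨆ d, tensorGrade K GA GB d = ⊤ := by
  rw [eq_top_iff, ← TensorProduct.span_tmul_eq_top, Submodule.span_le]
  rintro _ ⟨a, b, rfl⟩
  exact iSup_tensorGrade_mem K GA GB (ha ▸ trivial) (hb ▸ trivial)

lemma tensorGrade_eq_bot (GA : ℤ → Submodule K A) (GB : ℤ → Submodule K B) (a b d : ℤ)
    (ha : ∀ d < a, GA d = ⊥) (hb : ∀ d < b, GB d = ⊥) (hd : d < a + b) :
    tensorGrade K GA GB d = ⊥ := by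
  rw [eq_bot_iff]
  refine tensorGrade_le K _ _ _ _ fun p q hpq x hx y hy => ?_
  by_cases h : p < a
  · rw [ha p h, Submodule.mem_bot] at hx; simp [hx]
  · rw [hb q (by omega), Submodule.mem_bot] at hy; simp [hy]

/-- a grading coming from a homogeneous basis -/
def HasGrBasis (GA : ℤ → Submodule K A) : Prop :=
  ∃ (ι : Type) (e : Module.Basis ι K A) (deg : ι → ℤ),
    ∀ d, GA d = Submodule.span K (Set.image e {α | deg α = d})

lemma HasGrBasis.tensor {GA : ℤ → Submodule K A} {GB : ℤ → Submodule K B}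
    (ha : HasGrBasis K GA) (hb : HasGrBasis K GB) : HasGrBasis K (tensorGrade K GA GB) := by
  obtain ⟨ι, e, deg, he⟩ := ha
  obtain ⟨κ, f, deg', hf⟩ := hb
  refine ⟨ι × κ, e.tensorProduct f, fun x => deg x.1 + deg' x.2, fun d => ?_⟩
  apply le_antisymm
  · refine tensorGrade_le K _ _ _ _ fun p q hpq a ha b hb => ?_
    rw [he] at ha
    rw [hf] at hb
    induction ha using Submodule.span_induction with
    | mem x hx =>
      obtain ⟨α, hα, rfl⟩ := hx
      induction hb using Submodule.span_induction with
      | mem y hy =>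
        obtain ⟨β, hβ, rfl⟩ := hy
        refine Submodule.subset_span ⟨(α, β), ?_, by simp⟩
        simp only [Set.mem_ofPred_eq] at *
        omega
      | zero => simp
      | add x y _ _ hx hy => rw [TensorProduct.tmul_add]; exact Submodule.add_mem _ hx hy
      | smul c x _ hx => rw [TensorProduct.tmul_smul]; exact Submodule.smul_mem _ _ hx
    | zero => simp
    | add x y _ _ hx hy => rw [TensorProduct.add_tmul]; exact Submodule.add_mem _ hx hy
    | smul c x _ hx => rw [← TensorProduct.smul_tmul']; exact Submodule.smul_mem _ _ hx
  · rw [Submodule.span_le]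
    rintro _ ⟨⟨α, β⟩, hα, rfl⟩
    simp only [Module.Basis.tensorProduct_apply]
    refine tmul_mem_tensorGrade K _ _ hα ?_ ?_
    · rw [he]; exact Submodule.subset_span ⟨α, rfl, rfl⟩
    · rw [hf]; exact Submodule.subset_span ⟨β, rfl, rfl⟩

lemma HasGrBasis.proj {GA : ℤ → Submodule K A} (ha : HasGrBasis K GA) (d : ℤ) :
    ∃ P : A →ₗ[K] A, (∀ a ∈ GA d, P a = a) ∧ ∀ e ≠ d, ∀ a ∈ GA e, P a = 0 := by
  classical
  obtain ⟨ι, e, deg, he⟩ := ha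
  refine ⟨e.constr K (fun α => if deg α = d then e α else 0), ?_, ?_⟩
  · intro a ha
    rw [he] at ha
    induction ha using Submodule.span_induction with
    | mem x hx =>
      obtain ⟨α, hα, rfl⟩ := hx
      simp only [Set.mem_ofPred_eq] at hα
      simp [hα]
    | zero => simp
    | add x y _ _ hx hy => rw [map_add, hx, hy]
    | smul c x _ hx => rw [map_smul, hx]
  · intro e' hne a ha
    rw [he] at ha
    induction ha using Submodule.span_induction with
    | mem x hx =>
      obtain ⟨α, hα, rfl⟩ := hx
      simp only [Set.mem_ofPred_eq] at hα
      simp [hα, hne]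
    | zero => simp
    | add x y _ _ hx hy => rw [map_add, hx, hy, add_zero]
    | smul c x _ hx => rw [map_smul, hx, smul_zero]

/-- homogeneous parts of a graded subspace -/
lemma HasGrBasis.part {GA : ℤ → Submodule K A} (ha : HasGrBasis K GA)
    (U : ℤ → Submodule K A) (hU : ∀ d, U d ≤ GA d) (d : ℤ) :
    (⨆ e, U e) ⊓ GA d = U d := by
  obtain ⟨P, hP, hP0⟩ := ha.proj K d
  apply le_antisymm
  · rintro x ⟨hx, hxd⟩
    rw [← hP x hxd]
    clear hxd
    change x ∈ ⨆ e, U e at hx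
    induction hx using Submodule.iSup_induction' with
    | mem e a ha =>
      by_cases h : e = d
      · subst h; rw [hP _ (hU _ ha)]; exact ha
      · rw [hP0 e h _ (hU _ ha)]; simp
    | zero => simp
    | add x y _ _ hx hy => rw [map_add]; exact Submodule.add_mem _ hx hy
  · exact le_inf (le_iSup U d) (hU d)

/-- nonnegative, locally finite gradings -/
def NonnegFin (GA : ℤ → Submodule K A) : Prop :=
  (∀ d < 0, GA d = ⊥) ∧ ∀ d, FiniteDimensional K (GA d)

lemma NonnegFin.tensor {GA : ℤ → Submodule K A} {GB : ℤ → Submodule K B}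
    (ha : NonnegFin K GA) (hb : NonnegFin K GB) : NonnegFin K (tensorGrade K GA GB) := by
  refine ⟨fun d hd => tensorGrade_eq_bot K GA GB 0 0 d ha.1 hb.1 (by omega), fun d => ?_⟩
  have := ha.2
  have := hb.2
  have h : tensorGrade K GA GB d = ⨆ p ∈ Finset.Icc 0 d,
      LinearMap.range (TensorProduct.map (GA p).subtype (GB (d - p)).subtype) := by
    apply le_antisymm
    · refine tensorGrade_le K _ _ _ _ fun p q hpq a hha b hhb => ?_
      by_cases hp : p < 0
      · rw [ha.1 p hp, Submodule.mem_bot] at hha; simp [hha]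
      by_cases hq : q < 0
      · rw [hb.1 q hq, Submodule.mem_bot] at hhb; simp [hhb]
      obtain rfl : q = d - p := by omega
      refine Submodule.mem_iSup_of_mem p (Submodule.mem_iSup_of_mem ?_ ?_)
      · rw [Finset.mem_Icc]; omega
      · exact ⟨(⟨a, hha⟩ : GA p) ⊗ₜ (⟨b, hhb⟩ : GB (d - p)), by simp⟩
    · exact iSup_le fun p => iSup_le fun _ => le_iSup (fun p : ℤ =>
        LinearMap.range (TensorProduct.map (GA p).subtype (GB (d - p)).subtype)) p
  rw [h]
  exact Submodule.finiteDimensional_finset_sup (Finset.Icc 0 d) (fun p : ℤ =>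
        LinearMap.range (TensorProduct.map (GA p).subtype (GB (d - p)).subtype)) |> fun h => by
    rwa [Finset.sup_eq_iSup] at h

lemma NonnegFin.map {GA : ℤ → Submodule K A} (ha : NonnegFin K GA) (f : A →ₗ[K] A') :
    NonnegFin K (fun d => (GA d).map f) := by
  have := ha.2
  exact ⟨fun d hd => by simp [ha.1 d hd], fun d => inferInstance⟩

/-- Graded kernel. -/
def GrKer (GA : ℤ → Submodule K A) (f : A →ₗ[K] A') (KA : ℤ → Submodule K A) : Prop :=
  (∀ d, KA d ≤ GA d) ∧ LinearMap.ker f = ⨆ d, KA d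

lemma GrKer.tensor {GA KA : ℤ → Submodule K A} {GB KB : ℤ → Submodule K B}
    {f : A →ₗ[K] A'} {g : B →ₗ[K] B'} (hf : GrKer K GA f KA) (hg : GrKer K GB g KB)
    (hfs : Function.Surjective f) (hgs : Function.Surjective g)
    (ha : ⨆ d, GA d = ⊤) (hb : ⨆ d, GB d = ⊤) :
    GrKer K (tensorGrade K GA GB) (TensorProduct.map f g)
      (fun d => tensorGrade K KA GB d ⊔ tensorGrade K GA KB d) := by
  constructor
  · exact fun d => sup_le (tensorGrade_mono K hf.1 (fun _ => le_rfl) d)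
      (tensorGrade_mono K (fun _ => le_rfl) hg.1 d)
  · apply le_antisymm
    · rw [TensorProduct.map_ker (f := (LinearMap.ker f).subtype)
        (f' := (LinearMap.ker g).subtype) (LinearMap.exact_subtype_ker_map f) hfs
        (LinearMap.exact_subtype_ker_map g) hgs, iSup_sup_eq, sup_comm]
      apply sup_le_sup
      · rintro _ ⟨x, rfl⟩
        induction x using TensorProduct.induction_on with
        | zero => simp
        | tmul x y =>
          refine iSup_tensorGrade_mem K KA GB ?_ (hb ▸ trivial)
          rw [← hf.2]; exact x.2
        | add x y hx hy => rw [map_add]; exact Submodule.add_mem _ hx hy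
      · rintro _ ⟨x, rfl⟩
        induction x using TensorProduct.induction_on with
        | zero => simp
        | tmul x y =>
          refine iSup_tensorGrade_mem K GA KB (ha ▸ trivial) ?_
          rw [← hg.2]; exact y.2
        | add x y hx hy => rw [map_add]; exact Submodule.add_mem _ hx hy
    · refine iSup_le fun d => sup_le ?_ ?_
      · refine tensorGrade_le K _ _ _ _ fun p q hpq x hx y hy => ?_
        have : x ∈ LinearMap.ker f := hf.2 ▸ Submodule.mem_iSup_of_mem p hx
        rw [LinearMap.mem_ker] at this ⊢
        simp [this]
      · refine tensorGrade_le K _ _ _ _ fun p q hpq x hx y hy => ?_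
        have : y ∈ LinearMap.ker g := hg.2 ▸ Submodule.mem_iSup_of_mem q hy
        rw [LinearMap.mem_ker] at this ⊢
        simp [this]

lemma grKer_id (GA : ℤ → Submodule K A) : GrKer K GA (LinearMap.id : A →ₗ[K] A) (fun _ => ⊥) := by
  constructor
  · simp
  · simp

end graded


end Part1x


section Part2x

set_option linter.unusedSectionVars false

section functoriality

variable (N' : Type) [AddCommGroup N'] [Module K N'] [Module (PS K n) N']
  [IsScalarTower K (PS K n) N']
variable (M' : Type) [AddCommGroup M'] [Module K M'] [Module (PS K n) M']
  [IsScalarTower K (PS K n) M']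

/-- The map on `D_i` induced by a ring map `h` and a map `φ : N → N'`. -/
def dmap (h : PS K n →ₐ[K] PS K n) (φ : N →ₗ[K] N') :
    (i : ℕ) → (barD K n N i →ₗ[K] barD K n N' i)
  | 0 => φ
  | (i + 1) => TensorProduct.map h.toLinearMap (dmap h φ i)

variable {N N' M M'}

/-- The pairing `S × D_i → D_{i+1}`. -/
def dtm (i : ℕ) : PS K n →ₗ[K] barD K n N i →ₗ[K] barD K n N (i + 1) :=
  TensorProduct.mk K (PS K n) (barD K n N i)

/-- The left action of `S` on `D_i`. -/
def dact : (i : ℕ) → PS K n →ₗ[K] barD K n N i →ₗ[K] barD K n N i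
  | 0 => smulBilin K n N
  | (i + 1) => (TensorProduct.mapBilinear (RingHom.id K) (PS K n) (barD K n N i) (PS K n)
      (barD K n N i)).flip LinearMap.id ∘ₗ LinearMap.mul K (PS K n)

lemma dmap_dtm (h : PS K n →ₐ[K] PS K n) (φ : N →ₗ[K] N') (i : ℕ) (s : PS K n)
    (t : barD K n N i) :
    dmap K n N N' h φ (i + 1) (dtm K n i s t) = dtm K n i (h s) (dmap K n N N' h φ i t) := rfl

lemma dact_zero (s : PS K n) (t : N) : dact K n (N := N) 0 s t = (s • t : N) := rfl

lemma dact_succ (i : ℕ) (s s' : PS K n) (t : barD K n N i) :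
    dact K n (i + 1) s (dtm K n i s' t) = dtm K n i (s * s') t := rfl

lemma barC_zero (s : PS K n) (t : barD K n N 0) :
    barC K n N 0 (dtm K n 0 s t) = dact K n 0 s t := rfl

/-- induction on `D_{i+1}`. -/
lemma barD_induction {i : ℕ} {P : barD K n N (i + 1) → Prop}
    (h0 : P 0) (ht : ∀ (s : PS K n) (t : barD K n N i), P (dtm K n i s t))
    (ha : ∀ x y, P x → P y → P (x + y)) (x : barD K n N (i + 1)) : P x :=
  TensorProduct.induction_on (motive := P) x h0 ht ha

lemma barC_succ (i : ℕ) (s : PS K n) (x : barD K n N (i + 1)) :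
    barC K n N (i + 1) (dtm K n (i + 1) s x)
      = dact K n (i + 1) s x - dtm K n i s (barC K n N i x) := by
  induction x using barD_induction with
  | h0 => simp
  | ht s' t => rfl
  | ha x y hx hy => simp only [map_add, hx, hy]; abel

/-- The right contraction `M ⊗ D_{i+1} → M ⊗ D_i`. -/
def rcon (i : ℕ) : (M ⊗[K] barD K n N (i + 1)) →ₗ[K] (M ⊗[K] barD K n N i) :=
  (TensorProduct.map (smulMapM K n M) LinearMap.id).comp
      (TensorProduct.assoc K M (PS K n) (barD K n N i)).symm.toLinearMap

lemma rcon_tmul (i : ℕ) (m : M) (s : PS K n) (t : barD K n N i) :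
    rcon K n (N := N) i (m ⊗ₜ[K] dtm K n i s t) = (s • m) ⊗ₜ[K] t := rfl

lemma barB_tmul (i : ℕ) (m : M) (x : barD K n N (i + 1)) :
    barB K n N M i (m ⊗ₜ[K] x) = rcon K n i (m ⊗ₜ[K] x) - m ⊗ₜ[K] barC K n N i x := rfl

lemma dmap_dact (h : PS K n →ₐ[K] PS K n) (φ : N →ₗ[K] N')
    (hφ : ∀ (s : PS K n) (x : N), φ (s • x) = h s • φ x) (i : ℕ) (s : PS K n)
    (x : barD K n N i) :
    dmap K n N N' h φ i (dact K n i s x) = dact K n i (h s) (dmap K n N N' h φ i x) := by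
  cases i with
  | zero => exact hφ s x
  | succ i =>
    induction x using barD_induction with
    | h0 => simp
    | ht s' t => rw [dact_succ, dmap_dtm, dmap_dtm, dact_succ, map_mul]
    | ha x y hx hy => simp only [map_add, hx, hy]

lemma dmap_barC (h : PS K n →ₐ[K] PS K n) (φ : N →ₗ[K] N')
    (hφ : ∀ (s : PS K n) (x : N), φ (s • x) = h s • φ x) (i : ℕ) (x : barD K n N (i + 1)) :
    dmap K n N N' h φ i (barC K n N i x) = barC K n N' i (dmap K n N N' h φ (i + 1) x) := by
  induction i with
  | zero =>
    induction x using barD_induction with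
    | h0 => simp
    | ht s t => rw [barC_zero, dmap_dtm, barC_zero, dmap_dact K n h φ hφ]
    | ha x y hx hy => simp only [map_add, hx, hy]
  | succ i ih =>
    induction x using barD_induction with
    | h0 => simp
    | ht s t =>
      rw [barC_succ, dmap_dtm, barC_succ, map_sub, dmap_dact K n h φ hφ, dmap_dtm, ih]
    | ha x y hx hy => simp only [map_add, hx, hy]

lemma map_barB (h : PS K n →ₐ[K] PS K n) (φ : N →ₗ[K] N') (ψ : M →ₗ[K] M')
    (hφ : ∀ (s : PS K n) (x : N), φ (s • x) = h s • φ x)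
    (hψ : ∀ (s : PS K n) (x : M), ψ (s • x) = h s • ψ x) (i : ℕ)
    (x : M ⊗[K] barD K n N (i + 1)) :
    TensorProduct.map ψ (dmap K n N N' h φ i) (barB K n N M i x)
      = barB K n N' M' i (TensorProduct.map ψ (dmap K n N N' h φ (i + 1)) x) := by
  induction x using TensorProduct.induction_on with
  | zero => simp
  | tmul m t =>
    induction t using barD_induction with
    | h0 => simp
    | ht s t =>
      rw [barB_tmul, map_sub, rcon_tmul, TensorProduct.map_tmul, TensorProduct.map_tmul,
        TensorProduct.map_tmul, dmap_dtm, barB_tmul, rcon_tmul, hψ, dmap_barC K n h φ hφ, dmap_dtm]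
    | ha x y hx hy => simp only [TensorProduct.tmul_add, map_add, hx, hy]
  | add x y hx hy => simp only [map_add, hx, hy]

lemma map_dmap_grade (h : PS K n →ₐ[K] PS K n) (φ : N →ₗ[K] N')
    (hh : ∀ d, (polyGrade K n d).map h.toLinearMap = polyGrade K n d)
    (GN : ℤ → Submodule K N) (i : ℕ) :
    ∀ d, (barDGrade K n N GN i d).map (dmap K n N N' h φ i)
      = barDGrade K n N' (fun d => (GN d).map φ) i d := by
  induction i with
  | zero => intro d; rfl
  | succ i ih =>
    intro d
    refine (map_tensorGrade K (polyGrade K n) (barDGrade K n N GN i) h.toLinearMap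
      (dmap K n N N' h φ i) d).trans ?_
    simp only [hh, ih]
    rfl

lemma map_tot_grade (h : PS K n →ₐ[K] PS K n) (φ : N →ₗ[K] N') (ψ : M →ₗ[K] M')
    (hh : ∀ d, (polyGrade K n d).map h.toLinearMap = polyGrade K n d)
    (GN : ℤ → Submodule K N) (GM : ℤ → Submodule K M) (i : ℕ) (d : ℤ) :
    (tensorGrade K GM (barDGrade K n N GN i) d).map (TensorProduct.map ψ (dmap K n N N' h φ i))
      = tensorGrade K (fun d => (GM d).map ψ)
          (barDGrade K n N' (fun d => (GN d).map φ) i) d := by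
  rw [map_tensorGrade]
  simp only [map_dmap_grade K n h φ hh]

lemma dmap_surjective (h : PS K n →ₐ[K] PS K n) (φ : N →ₗ[K] N')
    (hh : Function.Surjective h) (hφ : Function.Surjective φ) (i : ℕ) :
    Function.Surjective (dmap K n N N' h φ i) := by
  induction i with
  | zero => exact hφ
  | succ i ih =>
    exact TensorProduct.map_surjective (g := h.toLinearMap) (g' := dmap K n N N' h φ i) hh ih

lemma tmap_injective {A B A' B' : Type} [AddCommGroup A] [Module K A] [AddCommGroup B]
    [Module K B] [AddCommGroup A'] [Module K A'] [AddCommGroup B'] [Module K B']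
    (f : A →ₗ[K] A') (g : B →ₗ[K] B') (hf : Function.Injective f) (hg : Function.Injective g) :
    Function.Injective (TensorProduct.map f g) := by
  have : TensorProduct.map f g = (LinearMap.rTensor B' f).comp (LinearMap.lTensor A g) := by
    ext; simp
  rw [this, LinearMap.coe_comp]
  exact (Module.Flat.rTensor_preserves_injective_linearMap f hf).comp
    (Module.Flat.lTensor_preserves_injective_linearMap g hg)

lemma dmap_injective (h : PS K n →ₐ[K] PS K n) (φ : N →ₗ[K] N')
    (hh : Function.Injective h) (hφ : Function.Injective φ) (i : ℕ) :
    Function.Injective (dmap K n N N' h φ i) := by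
  induction i with
  | zero => exact hφ
  | succ i ih => exact tmap_injective K h.toLinearMap (dmap K n N N' h φ i) hh ih

/-- Invariance of the strand dimension under compatible isomorphisms. -/
lemma torStrandDim_congr (h : PS K n →ₐ[K] PS K n) (φ : N →ₗ[K] N') (ψ : M →ₗ[K] M')
    (hh : ∀ d, (polyGrade K n d).map h.toLinearMap = polyGrade K n d)
    (hhb : Function.Bijective h)
    (hφ : ∀ (s : PS K n) (x : N), φ (s • x) = h s • φ x)
    (hψ : ∀ (s : PS K n) (x : M), ψ (s • x) = h s • ψ x)
    (hφb : Function.Bijective φ) (hψb : Function.Bijective ψ)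
    (GN : ℤ → Submodule K N) (GM : ℤ → Submodule K M)
    (i : ℕ) (j : ℤ) :
    torStrandDim K n N' M' (fun d => (GM d).map ψ) (fun d => (GN d).map φ) i j
      = torStrandDim K n N M GM GN i j := by
  have key : ∀ i, ∃ e : (M ⊗[K] barD K n N i) ≃ₗ[K] (M' ⊗[K] barD K n N' i),
      e.toLinearMap = TensorProduct.map ψ (dmap K n N N' h φ i) := by
    intro i
    refine ⟨LinearEquiv.ofBijective (TensorProduct.map ψ (dmap K n N N' h φ i)) ⟨?_, ?_⟩, ?_⟩
    · exact tmap_injective K _ _ hψb.1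
        (dmap_injective K n h φ hhb.1 hφb.1 i)
    · exact TensorProduct.map_surjective hψb.2 (dmap_surjective K n h φ hhb.2 hφb.2 i)
    · rfl
  choose e he using key
  have hc : ∀ i x, e i (barB K n N M i x) = barB K n N' M' i (e (i + 1) x) := by
    intro i x
    have := map_barB K n h φ ψ hφ hψ i x
    rw [← he, ← he] at this
    exact this
  have hg : ∀ i d, (tensorGrade K GM (barDGrade K n N GN i) d).map (e i).toLinearMap
      = tensorGrade K (fun d => (GM d).map ψ)
          (barDGrade K n N' (fun d => (GN d).map φ) i) d := by
    intro i d
    rw [he]; exact map_tot_grade K n h φ ψ hh GN GM i d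
  have hr : ∀ i, (LinearMap.range (barB K n N M i)).map (e i).toLinearMap
      = LinearMap.range (barB K n N' M' i) := by
    intro i
    ext y
    constructor
    · rintro ⟨_, ⟨x, rfl⟩, rfl⟩
      exact ⟨e (i + 1) x, (hc i x).symm⟩
    · rintro ⟨x, rfl⟩
      refine ⟨_, ⟨(e (i + 1)).symm x, rfl⟩, ?_⟩
      simp [hc]
  have hk : ∀ i, (LinearMap.ker (barB K n N M i)).map (e (i + 1)).toLinearMap
      = LinearMap.ker (barB K n N' M' i) := by
    intro i
    ext y
    constructor
    · rintro ⟨x, hx, rfl⟩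
      change barB K n N M i x = 0 at hx
      change barB K n N' M' i (e (i + 1) x) = 0
      rw [← hc, hx, map_zero]
    · intro hy
      refine ⟨(e (i + 1)).symm y, ?_, by simp⟩
      change barB K n N' M' i y = 0 at hy
      change barB K n N M i _ = 0
      apply (e i).injective
      rw [hc, LinearEquiv.apply_symm_apply, hy, map_zero]
  have hinf : ∀ i (U W : Submodule K (M ⊗[K] barD K n N i)),
      (U ⊓ W).map (e i).toLinearMap = U.map (e i).toLinearMap ⊓ W.map (e i).toLinearMap :=
    fun i U W => Submodule.map_inf _ (e i).injective
  cases i with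
  | zero =>
    simp only [torStrandDim]
    rw [← hr, ← hg, ← hinf, LinearEquiv.finrank_map_eq, LinearEquiv.finrank_map_eq]
  | succ i =>
    simp only [torStrandDim]
    rw [← hr, ← hg, ← hk, ← hinf, ← hinf, LinearEquiv.finrank_map_eq,
      LinearEquiv.finrank_map_eq]

end functoriality


end Part2x


section Part3x

section vanishing

variable {N M}

lemma barC_dact (i : ℕ) (s : PS K n) (x : barD K n N (i + 1)) :
    barC K n N i (dact K n (i + 1) s x) = dact K n i s (barC K n N i x) := by
  induction x using barD_induction with
  | h0 => simp
  | ht s' t =>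
    rw [dact_succ]
    cases i with
    | zero =>
      rw [barC_zero, barC_zero]
      exact mul_smul (α := PS K n) (β := N) s s' t
    | succ i =>
      rw [barC_succ, barC_succ, map_sub, dact_succ]
      congr 1
      induction t using barD_induction with
      | h0 => simp
      | ht s'' t => rw [dact_succ, dact_succ, dact_succ, mul_assoc]
      | ha x y hx hy => simp only [map_add, hx, hy]
  | ha x y hx hy => simp only [map_add, hx, hy]

lemma barC_barC (i : ℕ) (x : barD K n N (i + 2)) :
    barC K n N i (barC K n N (i + 1) x) = 0 := by
  induction i with
  | zero =>
    induction x using barD_induction with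
    | h0 => simp
    | ht s t => rw [barC_succ, map_sub, barC_dact, barC_zero, sub_self]
    | ha x y hx hy => rw [map_add, map_add, hx, hy, add_zero]
  | succ i ih =>
    induction x using barD_induction with
    | h0 => simp
    | ht s t => rw [barC_succ, map_sub, barC_dact, barC_succ, ih, map_zero, sub_zero, sub_self]
    | ha x y hx hy => rw [map_add, map_add, hx, hy, add_zero]

lemma rcon_dact (i : ℕ) (m : M) (s : PS K n) (x : barD K n N (i + 1)) :
    rcon K n i (m ⊗ₜ[K] dact K n (i + 1) s x) = rcon K n i ((s • m) ⊗ₜ[K] x) := by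
  induction x using barD_induction with
  | h0 => simp
  | ht s' t => rw [dact_succ, rcon_tmul, rcon_tmul, mul_comm, mul_smul]
  | ha x y hx hy => simp only [map_add, TensorProduct.tmul_add, hx, hy]

lemma barB_barB (i : ℕ) (x : M ⊗[K] barD K n N (i + 2)) :
    barB K n N M i (barB K n N M (i + 1) x) = 0 := by
  induction x using TensorProduct.induction_on with
  | zero => simp
  | tmul m t =>
    induction t using barD_induction with
    | h0 => simp
    | ht s t =>
      have h := barC_barC K n i (dtm K n (i + 1) s t)
      rw [barC_succ, map_sub, sub_eq_zero] at h
      rw [barB_tmul, rcon_tmul, map_sub, barB_tmul, barC_succ, TensorProduct.tmul_sub, map_sub,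
        barB_tmul, barB_tmul, rcon_dact, rcon_tmul, h]
      abel
    | ha x y hx hy => rw [TensorProduct.tmul_add, map_add, map_add, hx, hy, add_zero]
  | add x y hx hy => rw [map_add, map_add, hx, hy, add_zero]

/-- contracting homotopy for the bar complex of `S ⊗ M`. -/
def hcon (i : ℕ) : ((PS K n ⊗[K] M) ⊗[K] barD K n N i) →ₗ[K]
    ((PS K n ⊗[K] M) ⊗[K] barD K n N (i + 1)) :=
  TensorProduct.lift (TensorProduct.lift (LinearMap.mk₂ K
    (fun s m => (TensorProduct.mk K (PS K n ⊗[K] M) (barD K n N (i + 1)) (1 ⊗ₜ m)) ∘ₗ dtm K n i s)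
    (fun s s' m => by rw [map_add, LinearMap.comp_add])
    (fun c s m => by rw [map_smul, LinearMap.comp_smul])
    (fun s m m' => by rw [TensorProduct.tmul_add, map_add, LinearMap.add_comp])
    (fun c s m => by rw [TensorProduct.tmul_smul, map_smul, LinearMap.smul_comp])))

lemma hcon_tmul (i : ℕ) (s : PS K n) (m : M) (x : barD K n N i) :
    hcon K n i ((s ⊗ₜ[K] m) ⊗ₜ[K] x) = (1 ⊗ₜ[K] m) ⊗ₜ[K] dtm K n i s x := rfl

lemma hcon_spec (i : ℕ) (z : (PS K n ⊗[K] M) ⊗[K] barD K n N (i + 1)) :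
    barB K n N (PS K n ⊗[K] M) (i + 1) (hcon K n (i + 1) z)
      + hcon K n i (barB K n N (PS K n ⊗[K] M) i z) = z := by
  induction z using TensorProduct.induction_on with
  | zero => simp
  | tmul a y =>
    induction a using TensorProduct.induction_on with
    | zero => simp
    | tmul s m =>
      induction y using barD_induction with
      | h0 => simp
      | ht s' x =>
        rw [hcon_tmul, barB_tmul, rcon_tmul, barC_succ, dact_succ, barB_tmul, rcon_tmul,
          TensorProduct.smul_tmul', TensorProduct.smul_tmul', map_sub, hcon_tmul, hcon_tmul,
          TensorProduct.tmul_sub, smul_eq_mul, smul_eq_mul, mul_one, mul_comm s' s]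
        abel
      | ha x y hx hy =>
        rw [TensorProduct.tmul_add]
        simp only [map_add]
        rw [add_add_add_comm, hx, hy]
    | add a b ha hb =>
      rw [TensorProduct.add_tmul]
      simp only [map_add]
      rw [add_add_add_comm, ha, hb]
  | add x y hx hy =>
    simp only [map_add]
    rw [add_add_add_comm, hx, hy]

variable (M) in
/-- the multiplication map `S ⊗ M → M`, `S`-linear -/
def muM : (PS K n ⊗[K] M) →ₗ[PS K n] M :=
  TensorProduct.AlgebraTensorModule.lift
    ((LinearMap.lsmul (PS K n) M).flip.restrictScalars K |>.flip |> fun _ =>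
      { toFun := fun s => { toFun := fun m => s • m
                            map_add' := fun x y => smul_add s x y
                            map_smul' := fun c x => smul_comm s c x }
        map_add' := fun s s' => by ext; exact add_smul _ _ _
        map_smul' := fun s s' => by ext; exact mul_smul _ _ _ })

lemma muM_tmul (s : PS K n) (m : M) : muM K n M (s ⊗ₜ[K] m) = s • m := rfl

variable (M) in
/-- The syzygy module. -/
def Syz : Type := ↥(LinearMap.ker (muM K n M))

instance : AddCommGroup (Syz K n M) := inferInstanceAs (AddCommGroup ↥(LinearMap.ker (muM K n M)))
instance : Module (PS K n) (Syz K n M) :=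
  inferInstanceAs (Module (PS K n) ↥(LinearMap.ker (muM K n M)))
instance : Module K (Syz K n M) := inferInstanceAs (Module K ↥(LinearMap.ker (muM K n M)))
instance : IsScalarTower K (PS K n) (Syz K n M) :=
  inferInstanceAs (IsScalarTower K (PS K n) ↥(LinearMap.ker (muM K n M)))

variable (M) in
/-- inclusion of the syzygies -/
def syzι : Syz K n M →ₗ[PS K n] PS K n ⊗[K] M := (LinearMap.ker (muM K n M)).subtype

lemma syzι_inj : Function.Injective (syzι K n M) := Subtype.val_injective

lemma muM_syzι (x : Syz K n M) : muM K n M (syzι K n M x) = 0 := x.2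

variable (M) in
/-- `m ⊗ s ↦ s ⊗ m - 1 ⊗ s m` -/
def kap : (M ⊗[K] PS K n) →ₗ[K] Syz K n M :=
  LinearMap.codRestrict ((LinearMap.ker (muM K n M)).restrictScalars K)
    ((TensorProduct.comm K M (PS K n)).toLinearMap -
      (TensorProduct.mk K (PS K n) M 1) ∘ₗ smulMapM K n M) (by
    intro x
    change muM K n M _ = 0
    induction x using TensorProduct.induction_on with
    | zero => simp
    | tmul m s =>
      change muM K n M (s ⊗ₜ m - 1 ⊗ₜ (s • m)) = 0
      rw [map_sub, muM_tmul, muM_tmul, one_smul, sub_self]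
    | add x y hx hy => rw [map_add, map_add, hx, hy, add_zero])

lemma kap_tmul (m : M) (s : PS K n) :
    syzι K n M (kap K n M (m ⊗ₜ[K] s)) = s ⊗ₜ m - 1 ⊗ₜ (s • m) := rfl

/-- naturality of the bar differential in `M` -/
lemma barB_nat {P Q : Type} [AddCommGroup P] [Module K P] [Module (PS K n) P]
    [IsScalarTower K (PS K n) P] [AddCommGroup Q] [Module K Q] [Module (PS K n) Q]
    [IsScalarTower K (PS K n) Q] (f : P →ₗ[PS K n] Q) (i : ℕ)
    (x : P ⊗[K] barD K n N (i + 1)) :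
    TensorProduct.map (f.restrictScalars K) LinearMap.id (barB K n N P i x)
      = barB K n N Q i (TensorProduct.map (f.restrictScalars K) LinearMap.id x) := by
  induction x using TensorProduct.induction_on with
  | zero => simp
  | tmul m t =>
    induction t using barD_induction with
    | h0 => simp
    | ht s t =>
      rw [barB_tmul, map_sub, rcon_tmul, TensorProduct.map_tmul, TensorProduct.map_tmul,
        TensorProduct.map_tmul, barB_tmul]
      simp only [LinearMap.id_apply]
      rw [rcon_tmul]
      simp
    | ha x y hx hy => simp only [TensorProduct.tmul_add, map_add, hx, hy]
  | add x y hx hy => simp only [map_add, hx, hy]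

/-- the connecting map on chains -/
def conn {Q : Type} [AddCommGroup Q] [Module K Q] (k : (M ⊗[K] PS K n) →ₗ[K] Q) (i : ℕ) :
    (M ⊗[K] barD K n N (i + 1)) →ₗ[K] (Q ⊗[K] barD K n N i) :=
  (TensorProduct.map k LinearMap.id).comp
    (TensorProduct.assoc K M (PS K n) (barD K n N i)).symm.toLinearMap

lemma conn_tmul {Q : Type} [AddCommGroup Q] [Module K Q] (k : (M ⊗[K] PS K n) →ₗ[K] Q) (i : ℕ)
    (m : M) (s : PS K n) (x : barD K n N i) :
    conn K n k i (m ⊗ₜ dtm K n i s x) = k (m ⊗ₜ s) ⊗ₜ x := rfl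

section step

variable {P Q : Type} [AddCommGroup P] [Module K P] [Module (PS K n) P]
    [IsScalarTower K (PS K n) P] [AddCommGroup Q] [Module K Q] [Module (PS K n) Q]
    [IsScalarTower K (PS K n) Q]

lemma conn_key (ι : Q →ₗ[PS K n] P) (σ : M →ₗ[K] P) (k : (M ⊗[K] PS K n) →ₗ[K] Q)
    (hk : ∀ m s, ι (k (m ⊗ₜ s)) = s • σ m - σ (s • m)) (i : ℕ)
    (z : M ⊗[K] barD K n N (i + 1)) :
    TensorProduct.map (ι.restrictScalars K) LinearMap.id (conn K n k i z)
      = barB K n N P i (TensorProduct.map σ LinearMap.id z)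
        - TensorProduct.map σ LinearMap.id (barB K n N M i z) := by
  induction z using TensorProduct.induction_on with
  | zero => simp
  | tmul m t =>
    induction t using barD_induction with
    | h0 => simp
    | ht s t =>
      rw [conn_tmul, TensorProduct.map_tmul, TensorProduct.map_tmul, barB_tmul, barB_tmul,
        map_sub]
      simp only [LinearMap.id_apply]
      rw [rcon_tmul, rcon_tmul, TensorProduct.map_tmul, TensorProduct.map_tmul]
      simp only [LinearMap.id_apply]
      rw [LinearMap.restrictScalars_apply, hk, TensorProduct.sub_tmul]
      abel
    | ha x y hx hy => simp only [TensorProduct.tmul_add, map_add, hx, hy]; abel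
  | add x y hx hy => simp only [map_add, hx, hy]; abel

lemma bar_step (ι : Q →ₗ[PS K n] P) (σ : M →ₗ[K] P) (k : (M ⊗[K] PS K n) →ₗ[K] Q)
    (μ : P →ₗ[PS K n] M)
    (hk : ∀ m s, ι (k (m ⊗ₜ s)) = s • σ m - σ (s • m))
    (hμσ : ∀ m, μ (σ m) = m) (hμι : ∀ q, μ (ι q) = 0)
    (i : ℕ)
    (hP : ∀ z, barB K n N P i z = 0 → ∃ x, barB K n N P (i + 1) x = z)
    (z : M ⊗[K] barD K n N (i + 1)) (hb : barB K n N M i z = 0)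
    (hu : conn K n k i z ∈ LinearMap.range (barB K n N Q i)) :
    z ∈ LinearMap.range (barB K n N M (i + 1)) := by
  obtain ⟨y, hy⟩ := hu
  have hκz := conn_key K n ι σ k hk i z
  rw [hb, map_zero, sub_zero] at hκz
  have hcyc : barB K n N P i (TensorProduct.map σ LinearMap.id z
        - TensorProduct.map (ι.restrictScalars K) LinearMap.id y) = 0 := by
    rw [map_sub, ← hκz, ← hy, sub_eq_zero]
    exact barB_nat K n ι i y
  obtain ⟨x, hx⟩ := hP _ hcyc
  have h1 : TensorProduct.map (μ.restrictScalars K) LinearMap.id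
      (TensorProduct.map σ LinearMap.id z) = z := by
    rw [← LinearMap.comp_apply, ← TensorProduct.map_comp]
    have : (μ.restrictScalars K) ∘ₗ σ = LinearMap.id := by
      ext m; exact hμσ m
    rw [this, LinearMap.comp_id, TensorProduct.map_id, LinearMap.id_apply]
  have h2 : TensorProduct.map (μ.restrictScalars K) LinearMap.id
      (TensorProduct.map (ι.restrictScalars K) LinearMap.id y) = 0 := by
    rw [← LinearMap.comp_apply, ← TensorProduct.map_comp]
    have : (μ.restrictScalars K) ∘ₗ (ι.restrictScalars K) = 0 := by
      ext m; exact hμι m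
    rw [this, TensorProduct.map_zero_left, LinearMap.zero_apply]
  refine ⟨TensorProduct.map (μ.restrictScalars K) LinearMap.id x, ?_⟩
  rw [← barB_nat, hx, map_sub, h1, h2, sub_zero]

lemma conn_cycle (ι : Q →ₗ[PS K n] P) (σ : M →ₗ[K] P) (k : (M ⊗[K] PS K n) →ₗ[K] Q)
    (hk : ∀ m s, ι (k (m ⊗ₜ s)) = s • σ m - σ (s • m))
    (hι : Function.Injective ι) (i : ℕ)
    (z : M ⊗[K] barD K n N (i + 2)) (hb : barB K n N M (i + 1) z = 0) :
    barB K n N Q i (conn K n k (i + 1) z) = 0 := by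
  have hκz := conn_key K n ι σ k hk (i + 1) z
  rw [hb, map_zero, sub_zero] at hκz
  apply tmap_injective K (ι.restrictScalars K) (LinearMap.id : barD K n N i →ₗ[K] _) hι
    Function.injective_id
  rw [barB_nat, hκz, barB_barB, map_zero]

end step

/-- Vanishing of the low-degree strands. -/
lemma bar_vanish (GN : ℤ → Submodule K N) (hN : ∀ d < 0, GN d = ⊥) (i : ℕ) :
    ∀ (M : Type) [AddCommGroup M] [Module K M] [Module (PS K n) M] [IsScalarTower K (PS K n) M]
      (GM : ℤ → Submodule K M) (a j : ℤ), (∀ d < a, GM d = ⊥) → j < a + i →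
      ∀ z ∈ tensorGrade K GM (barDGrade K n N GN i) j,
      (∀ i', (h : i = i' + 1) → barB K n N M i' (h ▸ z) = 0) →
      z ∈ LinearMap.range (barB K n N M i) := by
  induction i with
  | zero =>
    intro M _ _ _ _ GM a j hM hj z hz _
    rw [tensorGrade_eq_bot K GM (barDGrade K n N GN 0) a 0 j hM hN (by simpa using hj),
      Submodule.mem_bot] at hz
    rw [hz]; exact Submodule.zero_mem _
  | succ i ih =>
    intro M _ _ _ _ GM a j hM hj z hz hcyc
    have hb : barB K n N M i z = 0 := hcyc i rfl
    clear hcyc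
    have hk : ∀ (m : M) (s : PS K n), syzι K n M (kap K n M (m ⊗ₜ s))
        = s • (TensorProduct.mk K (PS K n) M 1 m) - TensorProduct.mk K (PS K n) M 1 (s • m) := by
      intro m s
      rw [kap_tmul, TensorProduct.mk_apply, TensorProduct.mk_apply, TensorProduct.smul_tmul',
        smul_eq_mul, mul_one]
    refine bar_step K n (syzι K n M) (TensorProduct.mk K (PS K n) M 1) (kap K n M) (muM K n M)
      hk (fun m => ?_) (muM_syzι K n) i (fun x hx => ⟨hcon K n (i + 1) x, ?_⟩) z hb ?_
    · rw [TensorProduct.mk_apply, muM_tmul, one_smul]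
    · have := hcon_spec K n i x
      rwa [hx, map_zero, add_zero] at this
    let GS : ℤ → Submodule K (Syz K n M) := fun d =>
      (tensorGrade K GM (polyGrade K n) d).map (kap K n M)
    have hGS : ∀ d < a + 1, GS d = ⊥ := by
      intro d hd
      rw [eq_bot_iff]
      change (tensorGrade K GM (polyGrade K n) d).map (kap K n M) ≤ ⊥
      rw [Submodule.map_le_iff_le_comap]
      refine tensorGrade_le K _ _ _ _ fun p q hpq m hm s hs => ?_
      rw [Submodule.mem_comap, Submodule.mem_bot]
      by_cases hp : p < a
      · rw [hM p hp, Submodule.mem_bot] at hm; simp [hm]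
      by_cases hq : q < 0
      · rw [polyGrade, if_neg (by omega), Submodule.mem_bot] at hs; simp [hs]
      obtain rfl : q = 0 := by omega
      rw [polyGrade, if_pos le_rfl] at hs
      have hs' : s ∈ homogeneousSubmodule (Fin n) K 0 := hs
      rw [mem_homogeneousSubmodule, ← totalDegree_zero_iff_isHomogeneous] at hs'
      obtain ⟨c, rfl⟩ : ∃ c : K, s = C c := ⟨_, totalDegree_eq_zero_iff_eq_C.1 hs'⟩
      apply syzι_inj K n
      rw [kap_tmul]
      have e1 : (C c : PS K n) = c • 1 := by rw [smul_eq_C_mul, mul_one]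
      have e2 : (C c : PS K n) • m = c • m := by rw [e1, smul_assoc, one_smul]
      rw [e2, e1, TensorProduct.tmul_smul, ← TensorProduct.smul_tmul']
      simp
    have hu : conn K n (kap K n M) i z ∈ tensorGrade K GS (barDGrade K n N GN i) j := by
      have : tensorGrade K GM (barDGrade K n N GN (i + 1)) j ≤
          (tensorGrade K GS (barDGrade K n N GN i) j).comap (conn K n (kap K n M) i) := by
        refine tensorGrade_le K _ _ _ _ fun p q hpq m hm y hy => ?_
        have hy' : barDGrade K n N GN (i + 1) q ≤
            ((tensorGrade K GS (barDGrade K n N GN i) j).comap (conn K n (kap K n M) i)).comap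
              (TensorProduct.mk K M (barD K n N (i + 1)) m) := by
          refine tensorGrade_le K (polyGrade K n) (barDGrade K n N GN i) _ _
            fun p' q' hpq' s hs x hx => ?_
          change conn K n (kap K n M) i (m ⊗ₜ dtm K n i s x) ∈ tensorGrade K GS (barDGrade K n N GN i) j
          rw [conn_tmul]
          exact tmul_mem_tensorGrade K GS (barDGrade K n N GN i) (p := p + p') (q := q')
            (by omega) (Submodule.mem_map_of_mem (tmul_mem_tensorGrade K _ _ rfl hm hs)) hx
        exact hy' hy
      exact this hz
    refine ih (Syz K n M) GS (a + 1) j hGS (by push_cast at hj; linarith) _ hu ?_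
    intro i' h
    subst h
    exact conn_cycle K n (syzι K n M) (TensorProduct.mk K (PS K n) M 1) (kap K n M) hk
      (syzι_inj K n) i' z hb

end vanishing


end Part3x


section Part4x

section polyfacts

variable {K n}

lemma polyGrade_nat (d : ℕ) : polyGrade K n (d : ℤ) = homogeneousSubmodule (Fin n) K d := by
  simp [polyGrade]

lemma polyGrade_neg {d : ℤ} (hd : d < 0) : polyGrade K n d = ⊥ := by
  rw [polyGrade, if_neg (by omega)]

lemma monomial_mem_polyGrade (m : Fin n →₀ ℕ) (c : K) :
    monomial m c ∈ polyGrade K n (m.degree : ℤ) := by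
  rw [polyGrade_nat, mem_homogeneousSubmodule]
  exact isHomogeneous_monomial c rfl

lemma mem_polyGrade_iff {d : ℤ} {f : PS K n} :
    f ∈ polyGrade K n d ↔ ∀ m ∈ f.support, (m.degree : ℤ) = d := by
  by_cases hd : d < 0
  · rw [polyGrade_neg hd, Submodule.mem_bot]
    constructor
    · rintro rfl; simp
    · intro h
      rw [← support_eq_empty, Finset.eq_empty_iff_forall_notMem]
      intro m hm
      have := h m hm
      omega
  · lift d to ℕ using (by omega)
    rw [polyGrade_nat, mem_homogeneousSubmodule, IsHomogeneous, IsWeightedHomogeneous]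
    constructor
    · intro h m hm
      have := h (mem_support_iff.1 hm)
      rw [← this, Finsupp.degree_eq_weight_one]; rfl
    · intro h m hm
      have := h m (mem_support_iff.2 hm)
      rw [Finsupp.degree_eq_weight_one] at this
      exact_mod_cast this

lemma polyGrade_hasGrBasis : HasGrBasis K (polyGrade K n) := by
  refine ⟨Fin n →₀ ℕ, basisMonomials (Fin n) K, fun m => (m.degree : ℤ), fun d => ?_⟩
  apply le_antisymm
  · intro f hf
    rw [mem_polyGrade_iff] at hf
    rw [f.as_sum]
    refine Submodule.sum_mem _ fun m hm => ?_
    have : monomial m (coeff m f) = (coeff m f) • basisMonomials (Fin n) K m := by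
      rw [coe_basisMonomials, smul_monomial, smul_eq_mul, mul_one]
    rw [this]
    exact Submodule.smul_mem _ _ (Submodule.subset_span ⟨m, hf m hm, rfl⟩)
  · rw [Submodule.span_le]
    rintro _ ⟨m, hm, rfl⟩
    rw [coe_basisMonomials]
    have hm' : (m.degree : ℤ) = d := hm
    rw [← hm']
    exact monomial_mem_polyGrade m 1

lemma polyGrade_nonnegFin : NonnegFin K (polyGrade K n) := by
  refine ⟨fun d hd => polyGrade_neg hd, fun d => ?_⟩
  by_cases hd : d < 0
  · rw [polyGrade_neg hd]; infer_instance
  · lift d to ℕ using (by omega)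
    rw [polyGrade_nat]
    exact Module.Finite.iff_fg.2 (homogeneousSubmodule_fg (Fin n) K d)

lemma polyGrade_iSup : ⨆ d, polyGrade K n d = ⊤ := by
  rw [eq_top_iff]
  rintro f -
  rw [f.as_sum]
  exact Submodule.sum_mem _ fun m _ => Submodule.mem_iSup_of_mem _ (monomial_mem_polyGrade m _)

lemma barDGrade_hasGrBasis {GN : ℤ → Submodule K N} (h : HasGrBasis K GN) (i : ℕ) :
    HasGrBasis K (barDGrade K n N GN i) := by
  induction i with
  | zero => exact h
  | succ i ih => exact HasGrBasis.tensor K polyGrade_hasGrBasis ih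

lemma barDGrade_nonnegFin {GN : ℤ → Submodule K N} (h : NonnegFin K GN) (i : ℕ) :
    NonnegFin K (barDGrade K n N GN i) := by
  induction i with
  | zero => exact h
  | succ i ih => exact NonnegFin.tensor K polyGrade_nonnegFin ih

lemma barDGrade_iSup {GN : ℤ → Submodule K N} (h : ⨆ d, GN d = ⊤) (i : ℕ) :
    ⨆ d, barDGrade K n N GN i d = ⊤ := by
  induction i with
  | zero => exact h
  | succ i ih => exact iSup_tensorGrade K (polyGrade K n) (barDGrade K n N GN i) polyGrade_iSup ih

/-- The degree `d` part of an ideal. -/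
def igr (I : Ideal (PS K n)) (d : ℤ) : Submodule K (PS K n) :=
  I.restrictScalars K ⊓ polyGrade K n d

/-- The quotient map as a `K`-linear map. -/
def qmk (I : Ideal (PS K n)) : PS K n →ₗ[K] PS K n ⧸ I := (Ideal.Quotient.mkₐ K I).toLinearMap

lemma qmk_surj (I : Ideal (PS K n)) : Function.Surjective (qmk I) :=
  Ideal.Quotient.mkₐ_surjective K I

lemma ker_qmk (I : Ideal (PS K n)) : LinearMap.ker (qmk I) = I.restrictScalars K := by
  ext x
  exact Ideal.Quotient.eq_zero_iff_mem

lemma qmk_smul (I : Ideal (PS K n)) (s x : PS K n) : qmk I (s • x) = s • qmk I x := rfl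

lemma quotGrade_eq (I : Ideal (PS K n)) :
    quotGrade K n I = fun d => (polyGrade K n d).map (qmk I) := rfl

lemma qmk_grKer {I : Ideal (PS K n)} (hI : IsHomog K n I) :
    GrKer K (polyGrade K n) (qmk I) (igr I) := by
  refine ⟨fun d => inf_le_right, ?_⟩
  rw [ker_qmk]
  apply le_antisymm
  · intro f hf
    rw [← sum_homogeneousComponent f]
    refine Submodule.sum_mem _ fun d _ => Submodule.mem_iSup_of_mem (d : ℤ) ⟨hI f hf d, ?_⟩
    change _ ∈ polyGrade K n (d : ℤ)
    rw [polyGrade_nat]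
    exact homogeneousComponent_mem _ _
  · exact iSup_le fun d => inf_le_left

lemma quotGrade_nonnegFin (I : Ideal (PS K n)) : NonnegFin K (quotGrade K n I) :=
  NonnegFin.map K polyGrade_nonnegFin _

/-- The kernel family of `D_i(S) → D_i(S/J)`. -/
def kerD (J : Ideal (PS K n)) : (i : ℕ) → ℤ → Submodule K (barD K n (PS K n) i)
  | 0 => igr J
  | (i + 1) => tensorGrade K (polyGrade K n) (kerD J i)

lemma dmap_qmk_grKer {J : Ideal (PS K n)} (hJ : IsHomog K n J) (i : ℕ) :
    GrKer K (barDGrade K n (PS K n) (polyGrade K n) i)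
      (dmap K n (PS K n) (PS K n ⧸ J) (AlgHom.id K _) (qmk J) i) (kerD J i) := by
  induction i with
  | zero => exact qmk_grKer hJ
  | succ i ih =>
    have := GrKer.tensor K (grKer_id K (polyGrade K n)) ih Function.surjective_id
      (dmap_surjective K n (AlgHom.id K _) (qmk J) Function.surjective_id (qmk_surj J) i)
      polyGrade_iSup (barDGrade_iSup _ polyGrade_iSup i)
    have hw : (fun d => tensorGrade K (fun _ => (⊥ : Submodule K (PS K n)))
        (barDGrade K n (PS K n) (polyGrade K n) i) d ⊔ tensorGrade K (polyGrade K n) (kerD J i) d)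
        = kerD J (i + 1) := by
      funext d
      have h0 : tensorGrade K (fun _ => (⊥ : Submodule K (PS K n)))
          (barDGrade K n (PS K n) (polyGrade K n) i) d = ⊥ := by
        rw [eq_bot_iff]
        refine tensorGrade_le K _ _ _ _ fun p q _ a ha b _ => ?_
        rw [Submodule.mem_bot] at ha; simp [ha]
      rw [h0, bot_sup_eq]
      rfl
    rw [hw] at this
    exact this

/-- total space `V_i = S ⊗ D_i(S)` -/
abbrev Vt (K : Type) [Field K] (n : ℕ) (i : ℕ) : Type := PS K n ⊗[K] barD K n (PS K n) i

/-- its grading -/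
def Vg (i : ℕ) (j : ℤ) : Submodule K (Vt K n i) :=
  tensorGrade K (polyGrade K n) (barDGrade K n (PS K n) (polyGrade K n) i) j

/-- The projection. -/
def piq (I J : Ideal (PS K n)) (i : ℕ) :
    Vt K n i →ₗ[K] (PS K n ⧸ I) ⊗[K] barD K n (PS K n ⧸ J) i :=
  TensorProduct.map (qmk I) (dmap K n (PS K n) (PS K n ⧸ J) (AlgHom.id K _) (qmk J) i)

/-- The kernel in degree `j`. -/
def Wg (I J : Ideal (PS K n)) (i : ℕ) (j : ℤ) : Submodule K (Vt K n i) :=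
  tensorGrade K (igr I) (barDGrade K n (PS K n) (polyGrade K n) i) j ⊔
    tensorGrade K (polyGrade K n) (kerD J i) j

/-- The graded piece of the total complex. -/
def Gg (I J : Ideal (PS K n)) (i : ℕ) (j : ℤ) :
    Submodule K ((PS K n ⧸ I) ⊗[K] barD K n (PS K n ⧸ J) i) :=
  tensorGrade K (quotGrade K n I) (barDGrade K n (PS K n ⧸ J) (quotGrade K n J) i) j

lemma id_polyGrade (d : ℤ) :
    (polyGrade K n d).map (AlgHom.id K (PS K n)).toLinearMap = polyGrade K n d := by
  exact Submodule.map_id _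

lemma piq_grKer {I J : Ideal (PS K n)} (hI : IsHomog K n I) (hJ : IsHomog K n J) (i : ℕ) :
    GrKer K (Vg i) (piq I J i) (Wg I J i) :=
  GrKer.tensor K (qmk_grKer hI) (dmap_qmk_grKer hJ i) (qmk_surj I)
    (dmap_surjective K n _ _ Function.surjective_id (qmk_surj J) i) polyGrade_iSup
    (barDGrade_iSup _ polyGrade_iSup i)

lemma map_Vg (I J : Ideal (PS K n)) (i : ℕ) (j : ℤ) :
    (Vg i j).map (piq I J i) = Gg I J i j :=
  map_tot_grade K n (AlgHom.id K _) (qmk J) (qmk I) id_polyGrade (polyGrade K n)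
    (polyGrade K n) i j

lemma Vg_hasGrBasis (i : ℕ) : HasGrBasis K (Vg (K := K) (n := n) i) :=
  HasGrBasis.tensor K polyGrade_hasGrBasis (barDGrade_hasGrBasis _ polyGrade_hasGrBasis i)

lemma Vg_nonnegFin (i : ℕ) : NonnegFin K (Vg (K := K) (n := n) i) :=
  NonnegFin.tensor K polyGrade_nonnegFin (barDGrade_nonnegFin _ polyGrade_nonnegFin i)

lemma Vg_iSup (i : ℕ) : ⨆ j, Vg (K := K) (n := n) i j = ⊤ :=
  iSup_tensorGrade K _ _ polyGrade_iSup (barDGrade_iSup _ polyGrade_iSup i)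

lemma Wg_le (I J : Ideal (PS K n)) (hJ : IsHomog K n J) (i : ℕ) (j : ℤ) :
    Wg I J i j ≤ Vg i j :=
  sup_le (tensorGrade_mono K (fun _ => inf_le_right) (fun _ => le_rfl) j)
      (tensorGrade_mono K (fun _ => le_rfl) (dmap_qmk_grKer hJ i).1 j)

/-- The differential on `V`. -/
abbrev bV (K : Type) [Field K] (n : ℕ) (i : ℕ) : Vt K n (i + 1) →ₗ[K] Vt K n i :=
  barB K n (PS K n) (PS K n) i

/-- The differential on the quotient. -/
abbrev bQ (I J : Ideal (PS K n)) (i : ℕ) := barB K n (PS K n ⧸ J) (PS K n ⧸ I) i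

lemma piq_b (I J : Ideal (PS K n)) (i : ℕ) (x : Vt K n (i + 1)) :
    piq I J i (bV K n i x) = bQ I J i (piq I J (i + 1) x) :=
  map_barB K n (AlgHom.id K _) (qmk J) (qmk I) (qmk_smul J) (qmk_smul I) i x

end polyfacts


end Part4x


section Part5x

section formula

variable {K n}

lemma finrank_map_add {A A' : Type} [AddCommGroup A] [Module K A] [AddCommGroup A'] [Module K A']
    (f : A →ₗ[K] A') (U : Submodule K A) [FiniteDimensional K U] :
    Module.finrank K (U.map f) + Module.finrank K ↥(LinearMap.ker f ⊓ U) = Module.finrank K U := by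
  have h := LinearMap.finrank_range_add_finrank_ker (f.domRestrict U)
  rw [← h]
  congr 1
  · rw [LinearMap.range_domRestrict]
  · rw [LinearMap.ker_domRestrict]
    have : LinearMap.ker f ⊓ U = ((LinearMap.ker f).comap U.subtype).map U.subtype := by
      rw [Submodule.map_comap_subtype, inf_comm]
    rw [this]
    exact (LinearEquiv.finrank_eq (Submodule.equivMapOfInjective _ U.injective_subtype _)).symm

lemma rcon_grade (GM : ℤ → Submodule K M) (GN : ℤ → Submodule K N)
    (hM : ∀ p q, ∀ s ∈ polyGrade K n p, ∀ m ∈ GM q, s • m ∈ GM (p + q)) (i : ℕ) (j : ℤ) :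
    tensorGrade K GM (barDGrade K n N GN (i + 1)) j ≤
      (tensorGrade K GM (barDGrade K n N GN i) j).comap (rcon K n i) := by
  refine tensorGrade_le K _ _ _ _ fun p q hpq m hm y hy => ?_
  have hy' : barDGrade K n N GN (i + 1) q ≤
      ((tensorGrade K GM (barDGrade K n N GN i) j).comap (rcon K n i)).comap
        (TensorProduct.mk K M (barD K n N (i + 1)) m) := by
    refine tensorGrade_le K (polyGrade K n) (barDGrade K n N GN i) _ _
      fun p' q' hpq' s hs x hx => ?_
    change rcon K n i (m ⊗ₜ dtm K n i s x) ∈ tensorGrade K GM (barDGrade K n N GN i) j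
    rw [rcon_tmul]
    exact tmul_mem_tensorGrade K GM (barDGrade K n N GN i) (p := p' + p) (q := q')
      (by omega) (hM _ _ s hs m hm) hx
  exact hy' hy

lemma polyGrade_mul {p q : ℤ} {s t : PS K n} (hs : s ∈ polyGrade K n p)
    (ht : t ∈ polyGrade K n q) : s * t ∈ polyGrade K n (p + q) := by
  by_cases hp : p < 0
  · rw [polyGrade_neg hp, Submodule.mem_bot] at hs; simp [hs]
  by_cases hq : q < 0
  · rw [polyGrade_neg hq, Submodule.mem_bot] at ht; simp [ht]
  lift p to ℕ using (by omega)
  lift q to ℕ using (by omega)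
  rw [polyGrade_nat, mem_homogeneousSubmodule] at hs ht
  rw [← Nat.cast_add, polyGrade_nat, mem_homogeneousSubmodule]
  exact hs.mul ht

lemma dact_grade (GN : ℤ → Submodule K N)
    (hN : ∀ p q, ∀ s ∈ polyGrade K n p, ∀ m ∈ GN q, s • m ∈ GN (p + q)) (i : ℕ) (p q : ℤ)
    (s : PS K n) (hs : s ∈ polyGrade K n p) (x : barD K n N i) (hx : x ∈ barDGrade K n N GN i q) :
    dact K n i s x ∈ barDGrade K n N GN i (p + q) := by
  cases i with
  | zero => exact hN p q s hs x hx
  | succ i =>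
    have hy' : barDGrade K n N GN (i + 1) q ≤
        (barDGrade K n N GN (i + 1) (p + q)).comap (dact K n (i + 1) s) := by
      refine tensorGrade_le K (polyGrade K n) (barDGrade K n N GN i) _ _
        fun p' q' hpq' s' hs' x hx => ?_
      change dact K n (i + 1) s (dtm K n i s' x) ∈ barDGrade K n N GN (i + 1) (p + q)
      rw [dact_succ]
      exact tmul_mem_tensorGrade K (polyGrade K n) (barDGrade K n N GN i) (p := p + p') (q := q')
        (by omega) (polyGrade_mul hs hs') hx
    exact hy' hx

lemma barC_grade (GN : ℤ → Submodule K N)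
    (hN : ∀ p q, ∀ s ∈ polyGrade K n p, ∀ m ∈ GN q, s • m ∈ GN (p + q)) (i : ℕ) (d : ℤ) :
    barDGrade K n N GN (i + 1) d ≤ (barDGrade K n N GN i d).comap (barC K n N i) := by
  induction i generalizing d with
  | zero =>
    refine tensorGrade_le K (polyGrade K n) (barDGrade K n N GN 0) _ _
        fun p q hpq s hs x hx => ?_
    subst hpq
    exact hN p q s hs x hx
  | succ i ih =>
    refine tensorGrade_le K (polyGrade K n) (barDGrade K n N GN (i + 1)) _ _
        fun p q hpq s hs x hx => ?_
    subst hpq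
    change barC K n N (i + 1) (dtm K n (i + 1) s x) ∈ barDGrade K n N GN (i + 1) (p + q)
    rw [barC_succ]
    exact Submodule.sub_mem _ (dact_grade N GN hN (i + 1) p q s hs x hx)
      (tmul_mem_tensorGrade K (polyGrade K n) (barDGrade K n N GN i) rfl hs (ih q hx))

lemma bV_grade (i : ℕ) (j : ℤ) : Vg (i + 1) j ≤ (Vg i j).comap (bV K n i) := by
  intro x hx
  have h1 := rcon_grade (PS K n) (PS K n) (polyGrade K n) (polyGrade K n)
    (fun p q s hs m hm => polyGrade_mul hs hm) i j hx
  have h2 : x ∈ (Vg i j).comap (TensorProduct.map LinearMap.id (barC K n (PS K n) i)) := by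
    have : Vg (i + 1) j ≤ (Vg i j).comap (TensorProduct.map LinearMap.id (barC K n (PS K n) i)) := by
      refine tensorGrade_le K _ _ _ _ fun p q hpq m hm y hy => ?_
      exact tmul_mem_tensorGrade K _ _ hpq hm (barC_grade (PS K n) (polyGrade K n)
        (fun p q s hs m hm => polyGrade_mul hs hm) i q hy)
    exact this hx
  exact Submodule.sub_mem (Vg i j) h1 h2

/-- Abstract lemma on graded images. -/
lemma range_inf_grade {V' V G' G : Type} [AddCommGroup V'] [Module K V'] [AddCommGroup V]
    [Module K V] [AddCommGroup G'] [Module K G'] [AddCommGroup G] [Module K G]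
    {g' : ℤ → Submodule K V'} {g : ℤ → Submodule K V} (hg' : HasGrBasis K g')
    (hg : HasGrBasis K g) (ht : ⨆ d, g' d = ⊤) (b : V' →ₗ[K] V)
    (hb : ∀ d, g' d ≤ (g d).comap b) (p' : V' →ₗ[K] G') (p : V →ₗ[K] G)
    (hp' : Function.Surjective p') (c : G' →ₗ[K] G) (hc : ∀ x, p (b x) = c (p' x))
    {W : ℤ → Submodule K V} (hW : GrKer K g p W) (j : ℤ) :
    LinearMap.range c ⊓ (g j).map p = ((g' j).map p').map c := by
  apply le_antisymm
  · rintro y ⟨⟨z, rfl⟩, v, hv, hvy⟩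
    obtain ⟨x, rfl⟩ := hp' z
    obtain ⟨P, hP, hP0⟩ := hg.proj K j
    obtain ⟨P', hP', hP0'⟩ := hg'.proj K j
    have key : ∀ x, P (b x) = b (P' x) ∧ P' x ∈ g' j := by
      intro x
      have hx : x ∈ ⨆ d, g' d := ht ▸ trivial
      induction hx using Submodule.iSup_induction' with
      | mem d x hx =>
        by_cases hd : d = j
        · subst hd
          rw [hP' x hx, hP _ (hb _ hx)]
          exact ⟨rfl, hx⟩
        · rw [hP0' d hd x hx, hP0 d hd _ (hb _ hx)]; simp
      | zero => simp
      | add x y _ _ hx hy =>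
        simp only [map_add, hx.1, hy.1, true_and]
        exact Submodule.add_mem _ hx.2 hy.2
    have hker : b x - v ∈ LinearMap.ker p := by
      rw [LinearMap.mem_ker, map_sub, hc, hvy, sub_self]
    have hPW : ∀ u ∈ LinearMap.ker p, P u ∈ LinearMap.ker p := by
      intro u hu
      rw [hW.2] at hu
      induction hu using Submodule.iSup_induction' with
      | mem d u hu =>
        by_cases hd : d = j
        · subst hd
          rw [hP u (hW.1 _ hu), hW.2]
          exact Submodule.mem_iSup_of_mem _ hu
        · rw [hP0 d hd u (hW.1 _ hu)]; simp
      | zero => simp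
      | add x y _ _ hx hy => rw [map_add]; exact Submodule.add_mem _ hx hy
    have h := hPW _ hker
    rw [map_sub, (key x).1, hP v hv, LinearMap.mem_ker, map_sub, sub_eq_zero, hvy, hc] at h
    rw [← h]
    exact ⟨_, ⟨_, (key x).2, rfl⟩, rfl⟩
  · rintro _ ⟨_, ⟨x, hx, rfl⟩, rfl⟩
    refine ⟨⟨_, rfl⟩, b x, hb j hx, hc x⟩

variable (I J : Ideal (PS K n))

/-- `R_i + W_i`. -/
def RW (i : ℕ) (j : ℤ) : Submodule K (Vt K n i) := (Vg (i + 1) j).map (bV K n i) ⊔ Wg I J i j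

lemma piq_surj (i : ℕ) : Function.Surjective (piq I J i) :=
  TensorProduct.map_surjective (qmk_surj I)
    (dmap_surjective K n _ _ Function.surjective_id (qmk_surj J) i)

lemma range_inf (hI : IsHomog K n I) (hJ : IsHomog K n J) (i : ℕ) (j : ℤ) :
    LinearMap.range (bQ I J i) ⊓ Gg I J i j = (Gg I J (i + 1) j).map (bQ I J i) := by
  rw [← map_Vg, ← map_Vg]
  exact range_inf_grade (Vg_hasGrBasis (i + 1)) (Vg_hasGrBasis i) (Vg_iSup (i + 1)) (bV K n i)
    (bV_grade i) (piq I J (i + 1)) (piq I J i) (piq_surj I J (i + 1)) (bQ I J i) (piq_b I J i)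
    (piq_grKer hI hJ i) j

lemma ker_piq_inf (hI : IsHomog K n I) (hJ : IsHomog K n J) (i : ℕ) (j : ℤ) : LinearMap.ker (piq I J i) ⊓ Vg i j = Wg I J i j := by
  rw [(piq_grKer hI hJ i).2]
  exact (Vg_hasGrBasis i).part K _ (piq_grKer hI hJ i).1 j

lemma Vg_fin (i : ℕ) (j : ℤ) : FiniteDimensional K (Vg (K := K) (n := n) i j) :=
  (Vg_nonnegFin i).2 j

lemma finrank_G_add_W (hI : IsHomog K n I) (hJ : IsHomog K n J) (i : ℕ) (j : ℤ) :
    Module.finrank K (Gg I J i j) + Module.finrank K (Wg I J i j) =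
      Module.finrank K (Vg (K := K) (n := n) i j) := by
  have := Vg_fin (K := K) (n := n) i j
  rw [← ker_piq_inf I J hI hJ, ← map_Vg]
  exact finrank_map_add _ _

lemma RW_le (hJ : IsHomog K n J) (i : ℕ) (j : ℤ) : RW I J i j ≤ Vg i j :=
  sup_le (Submodule.map_le_iff_le_comap.2 (bV_grade i j)) (Wg_le I J hJ i j)

lemma finrank_rho (hI : IsHomog K n I) (hJ : IsHomog K n J) (i : ℕ) (j : ℤ) :
    Module.finrank K ((Gg I J (i + 1) j).map (bQ I J i)) + Module.finrank K (Wg I J i j) =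
      Module.finrank K (RW I J i j) := by
  have := Vg_fin (K := K) (n := n) i j
  have : FiniteDimensional K (RW I J i j) := Submodule.finiteDimensional_of_le (RW_le I J hJ i j)
  rw [← finrank_map_add (piq I J i) (RW I J i j)]
  have hWker : Wg I J i j ≤ LinearMap.ker (piq I J i) := by
    rw [← ker_piq_inf I J hI hJ]; exact inf_le_left
  have e1 : (RW I J i j).map (piq I J i) = (Gg I J (i + 1) j).map (bQ I J i) := by
    rw [RW, Submodule.map_sup, ← map_Vg, ← Submodule.map_comp, ← Submodule.map_comp]
    have : (piq I J i).comp (bV K n i) = (bQ I J i).comp (piq I J (i + 1)) :=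
      LinearMap.ext (piq_b I J i)
    rw [this, LinearMap.le_ker_iff_map.1 hWker, sup_bot_eq]
  have e2 : LinearMap.ker (piq I J i) ⊓ RW I J i j = Wg I J i j := by
    apply le_antisymm
    · rw [← ker_piq_inf I J hI hJ]
      exact inf_le_inf_left _ (RW_le I J hJ i j)
    · exact le_inf hWker le_sup_right
  rw [e1, e2]

lemma Gg_fin (i : ℕ) (j : ℤ) : FiniteDimensional K (Gg I J i j) :=
  (NonnegFin.tensor K (quotGrade_nonnegFin I)
    (barDGrade_nonnegFin _ (quotGrade_nonnegFin J) i)).2 j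

lemma torQQ_zero (hI : IsHomog K n I) (hJ : IsHomog K n J) (j : ℤ) : torQQ K n I J 0 j =
    Module.finrank K (Gg I J 0 j) - Module.finrank K ((Gg I J 1 j).map (bQ I J 0)) := by
  rw [← range_inf I J hI hJ]
  rfl

lemma torQQ_succ (hI : IsHomog K n I) (hJ : IsHomog K n J) (i : ℕ) (j : ℤ) : torQQ K n I J (i + 1) j =
    (Module.finrank K (Gg I J (i + 1) j) - Module.finrank K ((Gg I J (i + 1) j).map (bQ I J i)))
      - Module.finrank K ((Gg I J (i + 2) j).map (bQ I J (i + 1))) := by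
  have := Gg_fin I J (i + 1) j
  rw [← range_inf I J hI hJ (i + 1), ← finrank_map_add (bQ I J i) (Gg I J (i + 1) j),
    Nat.add_sub_cancel_left]
  rfl

/-- Comparison of Tor dimensions. -/
lemma torQQ_le {I J I' J' : Ideal (PS K n)} (hI : IsHomog K n I) (hJ : IsHomog K n J)
    (hI' : IsHomog K n I') (hJ' : IsHomog K n J') (j : ℤ)
    (hG : ∀ i, Module.finrank K (Gg I J i j) = Module.finrank K (Gg I' J' i j)) (i : ℕ)
    (h0 : Module.finrank K (RW I' J' (i - 1) j) ≤ Module.finrank K (RW I J (i - 1) j))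
    (h1 : Module.finrank K (RW I' J' i j) ≤ Module.finrank K (RW I J i j)) :
    torQQ K n I J i j ≤ torQQ K n I' J' i j := by
  have hW : ∀ i, Module.finrank K (Wg I J i j) = Module.finrank K (Wg I' J' i j) := fun i => by
    have a := finrank_G_add_W I J hI hJ i j
    have b := finrank_G_add_W I' J' hI' hJ' i j
    have := hG i
    omega
  have hr : ∀ i, Module.finrank K (RW I' J' i j) ≤ Module.finrank K (RW I J i j) →
      Module.finrank K ((Gg I' J' (i + 1) j).map (bQ I' J' i)) ≤
      Module.finrank K ((Gg I J (i + 1) j).map (bQ I J i)) := fun i h => by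
    have a := finrank_rho I J hI hJ i j
    have b := finrank_rho I' J' hI' hJ' i j
    have := hW i
    omega
  cases i with
  | zero =>
    rw [torQQ_zero I J hI hJ, torQQ_zero I' J' hI' hJ', hG]
    exact Nat.sub_le_sub_left (hr 0 h1) _
  | succ i =>
    rw [torQQ_succ I J hI hJ, torQQ_succ I' J' hI' hJ', hG]
    exact tsub_le_tsub (Nat.sub_le_sub_left (hr i h0) _) (hr (i + 1) h1)

/-- Vanishing. -/
lemma torQQ_eq_zero (i : ℕ) (j : ℤ) (hij : j < i) : torQQ K n I J i j = 0 := by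
  have hI0 := (quotGrade_nonnegFin I).1
  have hJ0 := (quotGrade_nonnegFin J).1
  have hv := bar_vanish K n (quotGrade K n J) hJ0 i (PS K n ⧸ I) (quotGrade K n I) 0 j hI0
    (by simpa using hij)
  have := Gg_fin I J i j
  cases i with
  | zero =>
    have h : Gg I J 0 j ≤ LinearMap.range (bQ I J 0) ⊓ Gg I J 0 j := fun z hz =>
      ⟨hv z hz (fun i' h => by omega), hz⟩
    have : FiniteDimensional K ↥(LinearMap.range (bQ I J 0) ⊓ Gg I J 0 j) :=
      Submodule.finiteDimensional_of_le inf_le_right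
    have hle := Submodule.finrank_mono h
    exact Nat.sub_eq_zero_of_le hle
  | succ i =>
    have h : LinearMap.ker (bQ I J i) ⊓ Gg I J (i + 1) j ≤
        LinearMap.range (bQ I J (i + 1)) ⊓ Gg I J (i + 1) j := by
      rintro z ⟨hz1, hz⟩
      refine ⟨hv z hz (fun i' h => ?_), hz⟩
      obtain rfl : i = i' := by omega
      exact hz1
    have : FiniteDimensional K ↥(LinearMap.range (bQ I J (i + 1)) ⊓ Gg I J (i + 1) j) :=
      Submodule.finiteDimensional_of_le inf_le_right
    have hle := Submodule.finrank_mono h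
    exact Nat.sub_eq_zero_of_le hle

end formula


end Part5x


section Part6x

section semicont

variable {K n}
variable {T : Type} (P : Subalgebra K (T → K))
variable {X Y : Type} [AddCommGroup X] [Module K X] [AddCommGroup Y] [Module K Y]

/-- Weakly polynomial vector functions. -/
def WP (v : T → X) : Prop := ∀ l : X →ₗ[K] K, (fun t => l (v t)) ∈ P

/-- Elements of `U t0` extending to a section. -/
def extSub (U : T → Submodule K X) (t0 : T) : Submodule K X where
  carrier := {x | ∃ v : T → X, WP P v ∧ v t0 = x ∧ ∀ t, v t ∈ U t}
  zero_mem' := ⟨fun _ => 0, fun l => by simp only [map_zero]; exact P.zero_mem, rfl, fun t => zero_mem _⟩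
  add_mem' := by
    rintro _ _ ⟨v, hv, rfl, hvU⟩ ⟨v', hv', rfl, hvU'⟩
    refine ⟨fun t => v t + v' t, fun l => ?_, rfl, fun t => add_mem (hvU t) (hvU' t)⟩
    simp only [map_add]
    exact P.add_mem (hv l) (hv' l)
  smul_mem' := by
    rintro c _ ⟨v, hv, rfl, hvU⟩
    refine ⟨fun t => c • v t, fun l => ?_, rfl, fun t => Submodule.smul_mem _ _ (hvU t)⟩
    simp only [map_smul]
    exact P.smul_mem (hv l) c

/-- The extension property. -/
def ExtP (U : T → Submodule K X) (t0 : T) : Prop := U t0 ≤ extSub P U t0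

variable {P}

lemma extSub_mono {U U' : T → Submodule K X} (h : ∀ t, U t ≤ U' t) (t0 : T) :
    extSub P U t0 ≤ extSub P U' t0 := by
  rintro _ ⟨v, hv, rfl, hvU⟩
  exact ⟨v, hv, rfl, fun t => h t (hvU t)⟩

lemma ExtP.const (U : Submodule K X) (t0 : T) : ExtP P (fun _ => U) t0 := by
  intro x hx
  exact ⟨fun _ => x, fun l => P.algebraMap_mem (l x), rfl, fun _ => hx⟩

lemma ExtP.sup {U U' : T → Submodule K X} {t0 : T} (h : ExtP P U t0) (h' : ExtP P U' t0) :
    ExtP P (fun t => U t ⊔ U' t) t0 :=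
  sup_le (h.trans (extSub_mono (fun _ => le_sup_left) t0))
    (h'.trans (extSub_mono (fun _ => le_sup_right) t0))

lemma ExtP.tensor_left {U : T → ℤ → Submodule K X} {t0 : T}
    (h : ∀ d, ExtP P (fun t => U t d) t0) (G : ℤ → Submodule K Y) (d : ℤ) :
    ExtP P (fun t => tensorGrade K (U t) G d) t0 := by
  refine tensorGrade_le K _ _ _ _ fun p q hpq a ha b hb => ?_
  obtain ⟨v, hv, rfl, hvU⟩ := h p ha
  exact ⟨fun t => v t ⊗ₜ b, fun l => hv (l ∘ₗ (TensorProduct.mk K X Y).flip b), rfl,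
    fun t => tmul_mem_tensorGrade K _ _ hpq (hvU t) hb⟩

lemma ExtP.tensor_right {U : T → ℤ → Submodule K Y} {t0 : T}
    (h : ∀ d, ExtP P (fun t => U t d) t0) (G : ℤ → Submodule K X) (d : ℤ) :
    ExtP P (fun t => tensorGrade K G (U t) d) t0 := by
  refine tensorGrade_le K _ _ _ _ fun p q hpq a ha b hb => ?_
  obtain ⟨v, hv, rfl, hvU⟩ := h q hb
  exact ⟨fun t => a ⊗ₜ v t, fun l => hv (l ∘ₗ TensorProduct.mk K X Y a), rfl,
    fun t => tmul_mem_tensorGrade K _ _ hpq ha (hvU t)⟩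

/-- Lower semicontinuity of the rank. -/
lemma ExtP.rank {U : T → Submodule K X} {t0 : T} (h : ExtP P U t0)
    (hfin : ∀ t, FiniteDimensional K (U t)) :
    ∃ F ∈ P, F t0 ≠ 0 ∧ ∀ t, F t ≠ 0 →
      Module.finrank K (U t0) ≤ Module.finrank K (U t) := by
  classical
  set r := Module.finrank K (U t0) with hr
  let b := Module.finBasis K (U t0)
  have hsec : ∀ k, ∃ v : T → X, WP P v ∧ v t0 = (b k : X) ∧ ∀ t, v t ∈ U t := fun k => h (b k).2
  choose v hv hv0 hvU using hsec
  obtain ⟨L, hL⟩ := LinearMap.exists_leftInverse_of_injective (U t0).subtype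
    (LinearMap.ker_eq_bot.2 (U t0).injective_subtype)
  let l : Fin r → X →ₗ[K] K := fun k => b.coord k ∘ₗ L
  have hl : ∀ k m, l k (v m t0) = if m = k then 1 else 0 := by
    intro k m
    have : L (b m : X) = b m := LinearMap.congr_fun hL (b m)
    simp only [l, hv0, LinearMap.comp_apply, this, Module.Basis.coord_apply,
      Module.Basis.repr_self, Finsupp.single_apply]
  let A : Matrix (Fin r) (Fin r) P := fun k m => ⟨fun t => l k (v m t), hv m (l k)⟩
  let ev : T → P →+* K := fun t => (Pi.evalRingHom (fun _ : T => K) t).comp P.val.toRingHom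
  have hdet : ∀ t, (A.det : T → K) t = Matrix.det (fun k m => l k (v m t)) := by
    intro t
    exact (ev t).map_det A
  refine ⟨A.det, A.det.2, ?_, ?_⟩
  · rw [hdet]
    have : (fun k m => l k (v m t0)) = (1 : Matrix (Fin r) (Fin r) K) := by
      ext k m
      rw [hl, Matrix.one_apply]
      simp only [eq_comm]
    rw [this, Matrix.det_one]
    exact one_ne_zero
  · intro t ht
    rw [hdet] at ht
    have := hfin t
    have hli : LinearIndependent K (fun m => (⟨v m t, hvU m t⟩ : U t)) := by
      rw [Fintype.linearIndependent_iff]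
      intro c hc
      have hc' : ∑ m, c m • v m t = 0 := by
        have := congrArg (U t).subtype hc
        simpa using this
      have h0 : Matrix.mulVec (fun k m => l k (v m t)) c = 0 := by
        ext k
        have := congrArg (l k) hc'
        simp only [map_sum, map_smul, map_zero, smul_eq_mul] at this
        simp only [Matrix.mulVec, dotProduct, Pi.zero_apply]
        rw [← this]
        exact Finset.sum_congr rfl fun m _ => mul_comm _ _
      have := Matrix.eq_zero_of_mulVec_eq_zero ht h0
      intro m
      rw [this]; rfl
    have := hli.fintype_card_le_finrank
    simpa using this

lemma kerD_ext {J : T → Ideal (PS K n)} {t0 : T}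
    (h : ∀ d, ExtP P (fun t => igr (J t) d) t0) (i : ℕ) :
    ∀ d, ExtP P (fun t => kerD (J t) i d) t0 := by
  induction i with
  | zero => exact h
  | succ i ih => intro d; exact ExtP.tensor_right ih (polyGrade K n) d

lemma RW_ext {I J : T → Ideal (PS K n)} {t0 : T}
    (hI : ∀ d, ExtP P (fun t => igr (I t) d) t0)
    (hJ : ∀ d, ExtP P (fun t => igr (J t) d) t0) (i : ℕ) (j : ℤ) :
    ExtP P (fun t => RW (I t) (J t) i j) t0 :=
  ExtP.sup (ExtP.const _ t0) (ExtP.sup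
    (ExtP.tensor_left hI (barDGrade K n (PS K n) (polyGrade K n) i) j)
    (ExtP.tensor_right (kerD_ext hJ i) (polyGrade K n) j))

/-- Graded isomorphism of quotients. -/
def QIso (I I' : Ideal (PS K n)) : Prop :=
  ∃ e : (PS K n ⧸ I) →ₗ[K] (PS K n ⧸ I'), Function.Bijective e ∧
    ∀ d, (quotGrade K n I d).map e = quotGrade K n I' d

lemma QIso.finrank_G {I I' J J' : Ideal (PS K n)} (hI : QIso I I') (hJ : QIso J J')
    (i : ℕ) (j : ℤ) :
    Module.finrank K (Gg I J i j) = Module.finrank K (Gg I' J' i j) := by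
  obtain ⟨e, he, heg⟩ := hI
  obtain ⟨f, hf, hfg⟩ := hJ
  have h := map_tot_grade K n (AlgHom.id K _) f e id_polyGrade (quotGrade K n J)
    (quotGrade K n I) i j
  simp only [heg, hfg] at h
  have hinj := tmap_injective K e (dmap K n (PS K n ⧸ J) (PS K n ⧸ J') (AlgHom.id K _) f i) he.1
    (dmap_injective K n (AlgHom.id K _) f Function.injective_id hf.1 i)
  have h' : (Gg I J i j).map (TensorProduct.map e
    (dmap K n (PS K n ⧸ J) (PS K n ⧸ J') (AlgHom.id K _) f i)) = Gg I' J' i j := h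
  rw [← h']
  exact LinearEquiv.finrank_eq (Submodule.equivMapOfInjective _ hinj _)

/-- The family theorem. -/
lemma family_le {I J : T → Ideal (PS K n)} {t0 : T}
    (hIh : ∀ t, IsHomog K n (I t)) (hJh : ∀ t, IsHomog K n (J t))
    (hIq : ∀ t, QIso (I t) (I t0)) (hJq : ∀ t, QIso (J t) (J t0))
    (hI : ∀ d, ExtP P (fun t => igr (I t) d) t0)
    (hJ : ∀ d, ExtP P (fun t => igr (J t) d) t0) (i : ℕ) (j : ℤ) :
    ∃ F ∈ P, F t0 ≠ 0 ∧ ∀ t, F t ≠ 0 →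
      torQQ K n (I t) (J t) i j ≤ torQQ K n (I t0) (J t0) i j := by
  have hfin : ∀ i t, FiniteDimensional K (RW (I t) (J t) i j) := fun i t => by
    have := Vg_fin (K := K) (n := n) i j
    exact Submodule.finiteDimensional_of_le (RW_le (I t) (J t) (hJh t) i j)
  obtain ⟨F, hF, hF0, hFr⟩ := (RW_ext hI hJ (i - 1) j).rank (hfin _)
  obtain ⟨F', hF', hF0', hFr'⟩ := (RW_ext hI hJ i j).rank (hfin _)
  refine ⟨F * F', P.mul_mem hF hF', mul_ne_zero hF0 hF0', fun t ht => ?_⟩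
  have ht' : F t * F' t ≠ 0 := ht
  exact torQQ_le (hIh t) (hJh t) (hIh t0) (hJh t0) j
    (fun i => QIso.finrank_G (hIq t) (hJq t) i j) i
    (hFr t (left_ne_zero_of_mul ht')) (hFr' t (right_ne_zero_of_mul ht'))

end semicont


end Part6x


section Part7x

section coord

variable {K n}

lemma coordChange_X (g : GL (Fin n) K) (i : Fin n) :
    coordChange K n g (X i) = ∑ j, ((g : Matrix (Fin n) (Fin n) K) j i) • X j := by
  simp [coordChange]

lemma coordChange_mul (g h : GL (Fin n) K) :
    coordChange K n (g * h) = (coordChange K n g).comp (coordChange K n h) := by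
  apply MvPolynomial.algHom_ext
  intro i
  rw [AlgHom.comp_apply, coordChange_X, coordChange_X, map_sum]
  simp only [map_smul, coordChange_X, Finset.smul_sum, smul_smul, Units.val_mul, Matrix.mul_apply,
    Finset.sum_smul]
  rw [Finset.sum_comm]
  refine Finset.sum_congr rfl fun j _ => Finset.sum_congr rfl fun k _ => ?_
  rw [mul_comm]

lemma coordChange_one : coordChange K n 1 = AlgHom.id K _ := by
  apply MvPolynomial.algHom_ext
  intro i
  rw [coordChange_X]
  simp [Matrix.one_apply]

/-- Coordinate change as an equivalence. -/
def ccE (g : GL (Fin n) K) : PS K n ≃ₐ[K] PS K n :=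
  AlgEquiv.ofAlgHom (coordChange K n g) (coordChange K n g⁻¹)
    (by rw [← coordChange_mul, mul_inv_cancel, coordChange_one])
    (by rw [← coordChange_mul, inv_mul_cancel, coordChange_one])

lemma ccE_apply (g : GL (Fin n) K) (f : PS K n) : ccE g f = coordChange K n g f := rfl

lemma coordChange_inv_apply (g : GL (Fin n) K) (f : PS K n) :
    coordChange K n g⁻¹ (coordChange K n g f) = f := (ccE g).symm_apply_apply f

lemma coordChange_apply_inv (g : GL (Fin n) K) (f : PS K n) :
    coordChange K n g (coordChange K n g⁻¹ f) = f := (ccE g).apply_symm_apply f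

lemma coordChange_mem_polyGrade (g : GL (Fin n) K) {d : ℤ} {f : PS K n}
    (hf : f ∈ polyGrade K n d) : coordChange K n g f ∈ polyGrade K n d := by
  by_cases hd : d < 0
  · rw [polyGrade_neg hd, Submodule.mem_bot] at hf
    rw [hf, map_zero]; exact zero_mem _
  lift d to ℕ using (by omega)
  rw [polyGrade_nat, mem_homogeneousSubmodule] at hf ⊢
  have := hf.aeval (S := K) (fun i => ∑ j, ((g : Matrix (Fin n) (Fin n) K) j i) • X j)
    (n := 1) (fun i => IsHomogeneous.sum _ _ _ fun j _ => by
      rw [smul_eq_C_mul]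
      simpa using (isHomogeneous_C (Fin n) ((g : Matrix (Fin n) (Fin n) K) j i)).mul (isHomogeneous_X K j))
  rwa [one_mul] at this

lemma map_coordChange_polyGrade (g : GL (Fin n) K) (d : ℤ) :
    (polyGrade K n d).map (coordChange K n g).toLinearMap = polyGrade K n d := by
  apply le_antisymm
  · rintro _ ⟨f, hf, rfl⟩
    exact coordChange_mem_polyGrade g hf
  · intro f hf
    exact ⟨_, coordChange_mem_polyGrade g⁻¹ hf, coordChange_apply_inv g f⟩

/-- Transform of an ideal. -/
def gI (g : GL (Fin n) K) (I : Ideal (PS K n)) : Ideal (PS K n) := Ideal.map (coordChange K n g) I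

lemma mem_gI {g : GL (Fin n) K} {I : Ideal (PS K n)} {f : PS K n} :
    f ∈ gI g I ↔ coordChange K n g⁻¹ f ∈ I := by
  rw [gI, Ideal.mem_map_iff_of_surjective _ (show Function.Surjective (coordChange K n g) from
    (ccE g).surjective)]
  constructor
  · rintro ⟨x, hx, rfl⟩
    rwa [coordChange_inv_apply]
  · intro h
    exact ⟨_, h, coordChange_apply_inv g f⟩

lemma gI_mul (g h : GL (Fin n) K) (I : Ideal (PS K n)) : gI (g * h) I = gI g (gI h I) := by
  ext f
  simp only [mem_gI, mul_inv_rev, coordChange_mul, AlgHom.comp_apply]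

lemma gI_one (I : Ideal (PS K n)) : gI (1 : GL (Fin n) K) I = I := by
  ext f
  simp [mem_gI, coordChange_one]

lemma homogeneousComponent_coordChange (g : GL (Fin n) K) (d : ℕ) (f : PS K n) :
    homogeneousComponent d (coordChange K n g f) = coordChange K n g (homogeneousComponent d f) := by
  have h : ∀ e, homogeneousComponent d (coordChange K n g (homogeneousComponent e f)) =
      if d = e then coordChange K n g (homogeneousComponent e f) else 0 := by
    intro e
    have h1 : homogeneousComponent e f ∈ polyGrade K n (e : ℤ) := by
      rw [polyGrade_nat]; exact homogeneousComponent_mem _ _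
    have h2 := coordChange_mem_polyGrade g h1
    rw [polyGrade_nat] at h2
    exact homogeneousComponent_of_mem h2
  conv_lhs => rw [← sum_homogeneousComponent f]
  rw [map_sum, map_sum]
  simp only [h]
  rw [Finset.sum_ite_eq]
  split_ifs with hd
  · rfl
  · rw [Finset.mem_range, not_lt] at hd
    rw [homogeneousComponent_eq_zero _ _ (by omega), map_zero]

lemma gI_homog (g : GL (Fin n) K) {I : Ideal (PS K n)} (hI : IsHomog K n I) :
    IsHomog K n (gI g I) := by
  intro f hf d
  rw [mem_gI] at hf ⊢
  rw [← homogeneousComponent_coordChange]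
  exact hI _ hf d

/-- The induced map on quotients. -/
def gQ (g : GL (Fin n) K) (I : Ideal (PS K n)) : (PS K n ⧸ I) ≃ₐ[K] (PS K n ⧸ gI g I) :=
  Ideal.quotientEquivAlg I (gI g I) (ccE g) rfl

lemma gQ_qmk (g : GL (Fin n) K) (I : Ideal (PS K n)) (f : PS K n) :
    gQ g I (qmk I f) = qmk (gI g I) (coordChange K n g f) := rfl

lemma map_gQ (g : GL (Fin n) K) (I : Ideal (PS K n)) (d : ℤ) :
    (quotGrade K n I d).map (gQ g I).toLinearMap = quotGrade K n (gI g I) d := by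
  simp only [quotGrade_eq]
  rw [← Submodule.map_comp]
  have : (gQ g I).toLinearMap ∘ₗ qmk I = qmk (gI g I) ∘ₗ (coordChange K n g).toLinearMap :=
    LinearMap.ext (gQ_qmk g I)
  rw [this, Submodule.map_comp, map_coordChange_polyGrade]

lemma gQ_smul (g : GL (Fin n) K) (I : Ideal (PS K n)) (s : PS K n) (x : PS K n ⧸ I) :
    gQ g I (s • x) = coordChange K n g s • gQ g I x := by
  obtain ⟨f, rfl⟩ := qmk_surj I x
  rw [← qmk_smul, gQ_qmk, gQ_qmk, ← qmk_smul, smul_eq_mul, smul_eq_mul, map_mul]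

lemma qIso_gI (g : GL (Fin n) K) (I : Ideal (PS K n)) : QIso I (gI g I) :=
  ⟨(gQ g I).toLinearMap, (gQ g I).bijective, map_gQ g I⟩

lemma torQQ_gI (g : GL (Fin n) K) (I J : Ideal (PS K n)) (i : ℕ) (j : ℤ) :
    torQQ K n (gI g I) (gI g J) i j = torQQ K n I J i j := by
  have h := torStrandDim_congr K n (coordChange K n g) (gQ g J).toLinearMap (gQ g I).toLinearMap
    (map_coordChange_polyGrade g) (ccE g).bijective (gQ_smul g J) (gQ_smul g I)
    (gQ g J).bijective (gQ g I).bijective (quotGrade K n J) (quotGrade K n I) i j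
  simp only [map_gQ] at h
  exact h

/-- Polynomial functions on `GL`. -/
def PGL : Subalgebra K (GL (Fin n) K → K) :=
  (MvPolynomial.aeval (R := K) (fun p : Fin n × Fin n => fun g : GL (Fin n) K =>
    (g : Matrix (Fin n) (Fin n) K) p.1 p.2)).range

lemma mem_PGL {F : GL (Fin n) K → K} : F ∈ PGL (K := K) (n := n) ↔
    ∃ p : MvPolynomial (Fin n × Fin n) K, ∀ g : GL (Fin n) K,
      F g = eval (fun p => (g : Matrix (Fin n) (Fin n) K) p.1 p.2) p := by
  have key : ∀ (p : MvPolynomial (Fin n × Fin n) K) (g : GL (Fin n) K),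
      (MvPolynomial.aeval (R := K) (fun p : Fin n × Fin n => fun g : GL (Fin n) K =>
      (g : Matrix (Fin n) (Fin n) K) p.1 p.2)) p g =
      eval (fun p => (g : Matrix (Fin n) (Fin n) K) p.1 p.2) p := by
    intro p g
    induction p using MvPolynomial.induction_on with
    | C a => simp
    | add p q hp hq => simp only [map_add, Pi.add_apply, hp, hq]
    | mul_X p i hp => simp only [map_mul, Pi.mul_apply, hp, aeval_X, eval_X]
  constructor
  · intro hF
    rw [PGL, AlgHom.mem_range] at hF
    obtain ⟨p, rfl⟩ := hF
    exact ⟨p, key p⟩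
  · rintro ⟨p, hp⟩
    have : F = (MvPolynomial.aeval (R := K) (fun p : Fin n × Fin n => fun g : GL (Fin n) K =>
      (g : Matrix (Fin n) (Fin n) K) p.1 p.2)) p := by
      funext g
      rw [key, hp]
    rw [this, PGL]
    exact AlgHom.mem_range_self _ p

lemma coordChange_WP (f : PS K n) : WP (PGL (K := K) (n := n)) (fun g => coordChange K n g f) := by
  induction f using MvPolynomial.induction_on with
  | C a =>
    intro l
    have : (fun g : GL (Fin n) K => l (coordChange K n g (C a))) = algebraMap K _ (l (C a)) := by
      funext g
      have : coordChange K n g (C a) = C a := (coordChange K n g).commutes a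
      rw [this]; rfl
    rw [this]
    exact Subalgebra.algebraMap_mem _ _
  | add p q hp hq =>
    intro l
    simp only [map_add]
    exact Subalgebra.add_mem _ (hp l) (hq l)
  | mul_X p i hp =>
    intro l
    have : (fun g : GL (Fin n) K => l (coordChange K n g (p * X i))) =
        ∑ j, (fun g : GL (Fin n) K => (g : Matrix (Fin n) (Fin n) K) j i) *
          (fun g => (l ∘ₗ LinearMap.mulRight K (X j)) (coordChange K n g p)) := by
      funext g
      rw [map_mul, coordChange_X, Finset.mul_sum, map_sum, Finset.sum_apply]
      refine Finset.sum_congr rfl fun j _ => ?_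
      simp only [mul_smul_comm, map_smul, smul_eq_mul, Pi.mul_apply, LinearMap.comp_apply,
        LinearMap.mulRight_apply]
    rw [this]
    refine Subalgebra.sum_mem _ fun j _ => Subalgebra.mul_mem _ ?_ (hp _)
    exact mem_PGL.2 ⟨X (j, i), fun g => by simp⟩

lemma gI_ext (J : Ideal (PS K n)) (g0 : GL (Fin n) K) (d : ℤ) :
    ExtP (PGL (K := K) (n := n)) (fun g => igr (gI g J) d) g0 := by
  rintro x ⟨hx, hxd⟩
  have hx' : x ∈ gI g0 J := hx
  rw [mem_gI] at hx'
  refine ⟨fun g => coordChange K n g (coordChange K n g0⁻¹ x), coordChange_WP _,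
    coordChange_apply_inv g0 x, fun g => ⟨?_, ?_⟩⟩
  · change _ ∈ gI g J
    rwa [mem_gI, coordChange_inv_apply]
  · exact coordChange_mem_polyGrade g (coordChange_mem_polyGrade g0⁻¹ hxd)

lemma GL_le {I J : Ideal (PS K n)} (hI : IsHomog K n I) (hJ : IsHomog K n J)
    (g0 : GL (Fin n) K) (i : ℕ) (j : ℤ) :
    ∃ F : MvPolynomial (Fin n × Fin n) K, F ≠ 0 ∧ ∀ g : GL (Fin n) K,
      eval (fun p => (g : Matrix (Fin n) (Fin n) K) p.1 p.2) F ≠ 0 →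
      torQQ K n I (gI g J) i j ≤ torQQ K n I (gI g0 J) i j := by
  have hid : QIso I I := by
    have := qIso_gI (1 : GL (Fin n) K) I
    rwa [gI_one] at this
  obtain ⟨F, hF, hF0, h⟩ := family_le (P := PGL (K := K) (n := n)) (I := fun _ => I)
    (J := fun g => gI g J) (t0 := g0) (fun _ => hI) (fun g => gI_homog g hJ)
    (fun _ => hid) (fun g => by
      have := qIso_gI (g0 * g⁻¹) (gI g J)
      rwa [← gI_mul, inv_mul_cancel_right] at this)
    (fun d => ExtP.const _ _) (gI_ext J g0) i j
  obtain ⟨p, hp⟩ := mem_PGL.1 hF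
  refine ⟨p, ?_, fun g hg => h g (by rwa [hp])⟩
  rintro rfl
  exact hF0 (by rw [hp]; simp)

end coord


end Part7x


section Part8x

section initial

variable {K n}

lemma QIso.symm {I I' : Ideal (PS K n)} (h : QIso I I') : QIso I' I := by
  obtain ⟨e, he, hg⟩ := h
  let E := LinearEquiv.ofBijective e he
  refine ⟨E.symm.toLinearMap, E.symm.bijective, fun d => ?_⟩
  rw [← hg, ← Submodule.map_comp]
  have : E.symm.toLinearMap ∘ₗ e = LinearMap.id := LinearMap.ext fun x => E.symm_apply_apply x
  rw [this, Submodule.map_id]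

lemma QIso.trans {I I' I'' : Ideal (PS K n)} (h : QIso I I') (h' : QIso I' I'') : QIso I I'' := by
  obtain ⟨e, he, hg⟩ := h
  obtain ⟨f, hf, hg'⟩ := h'
  exact ⟨f ∘ₗ e, hf.comp he, fun d => by rw [Submodule.map_comp, hg, hg']⟩

/-- Two homogeneous ideals with a common graded complement. -/
lemma qIso_of_compl {I I' : Ideal (PS K n)} (hI : IsHomog K n I) (hI' : IsHomog K n I')
    (C : Submodule K (PS K n)) (hC : ∀ f ∈ C, ∀ d, homogeneousComponent d f ∈ C)
    (h0 : ∀ f ∈ C, f ∈ I → f = 0) (h1 : ∀ f, ∃ b ∈ C, f - b ∈ I)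
    (h0' : ∀ f ∈ C, f ∈ I' → f = 0) (h1' : ∀ f, ∃ b ∈ C, f - b ∈ I') : QIso I I' := by
  have key : ∀ I : Ideal (PS K n), IsHomog K n I → (∀ f ∈ C, f ∈ I → f = 0) →
      (∀ f, ∃ b ∈ C, f - b ∈ I) → Function.Bijective (qmk I ∘ₗ C.subtype) ∧
      ∀ d, ((polyGrade K n d).comap C.subtype).map (qmk I ∘ₗ C.subtype) = quotGrade K n I d := by
    intro I hI h0 h1
    have hsub : ∀ f b : PS K n, f - b ∈ I → qmk I f = qmk I b := by
      intro f b h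
      rw [← sub_eq_zero, ← map_sub]
      have : f - b ∈ LinearMap.ker (qmk I) := by rw [ker_qmk]; exact h
      exact this
    refine ⟨⟨?_, ?_⟩, fun d => ?_⟩
    · rw [← LinearMap.ker_eq_bot, eq_bot_iff]
      rintro ⟨x, hx⟩ hxk
      have h : x ∈ LinearMap.ker (qmk I) := hxk
      rw [ker_qmk] at h
      have := h0 x hx h
      subst this
      exact Submodule.zero_mem _
    · intro y
      obtain ⟨f, rfl⟩ := qmk_surj I y
      obtain ⟨b, hb, hfb⟩ := h1 f
      exact ⟨⟨b, hb⟩, (hsub f b hfb).symm⟩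
    · rw [Submodule.map_comp, quotGrade_eq]
      apply le_antisymm
      · apply Submodule.map_mono
        rintro _ ⟨x, hx, rfl⟩
        exact hx
      · rintro _ ⟨f, hf, rfl⟩
        change f ∈ polyGrade K n d at hf
        by_cases hd : d < 0
        · rw [polyGrade_neg hd, Submodule.mem_bot] at hf
          rw [hf, map_zero]; exact zero_mem _
        lift d to ℕ using (by omega)
        obtain ⟨b, hb, hfb⟩ := h1 f
        have hfd : homogeneousComponent d f = f := by
          rw [polyGrade_nat, mem_homogeneousSubmodule] at hf
          exact homogeneousComponent_eq_self hf
        have := hI _ hfb d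
        rw [map_sub, hfd] at this
        rw [hsub _ _ this]
        refine ⟨_, ⟨⟨_, hC b hb d⟩, ?_, rfl⟩, rfl⟩
        change homogeneousComponent d b ∈ polyGrade K n d
        rw [polyGrade_nat]
        exact homogeneousComponent_mem _ _
  obtain ⟨hb, hg⟩ := key I hI h0 h1
  obtain ⟨hb', hg'⟩ := key I' hI' h0' h1'
  let E := LinearEquiv.ofBijective _ hb
  refine ⟨(qmk I' ∘ₗ C.subtype) ∘ₗ E.symm.toLinearMap, hb'.comp E.symm.bijective, fun d => ?_⟩
  rw [← hg, ← hg', Submodule.map_comp, ← Submodule.map_comp _ E.symm.toLinearMap]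
  have : E.symm.toLinearMap ∘ₗ (qmk I ∘ₗ C.subtype) = LinearMap.id :=
    LinearMap.ext fun x => E.symm_apply_apply x
  rw [this, Submodule.map_id]

open Classical in
/-- Filtering the terms of a polynomial. -/
def filt (p : (Fin n →₀ ℕ) → Prop) : PS K n →ₗ[K] PS K n :=
  (basisMonomials (Fin n) K).constr K (fun m => if p m then monomial m 1 else 0)

open Classical in
lemma coeff_filt (p : (Fin n →₀ ℕ) → Prop) (f : PS K n) (m : Fin n →₀ ℕ) :
    coeff m (filt p f) = if p m then coeff m f else 0 := by
  induction f using MvPolynomial.induction_on' with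
  | monomial u a =>
    have : (monomial u a : PS K n) = a • basisMonomials (Fin n) K u := by
      rw [coe_basisMonomials, smul_monomial, smul_eq_mul, mul_one]
    rw [this, map_smul, filt, Module.Basis.constr_basis, coe_basisMonomials]
    by_cases hu : u = m
    · subst hu
      by_cases hp : p u <;> simp [hp, coeff_smul]
    · by_cases hp : p u <;> simp [hp, coeff_smul, coeff_monomial, hu]
  | add f g hf hg =>
    rw [map_add, coeff_add, hf, hg, coeff_add]
    split_ifs <;> simp

lemma coeff_initialForm (w : Fin n → ℕ) (f : PS K n) (m : Fin n →₀ ℕ) :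
    coeff m (initialForm K n w f) =
      if wdeg n w m = f.support.sup (wdeg n w) then coeff m f else 0 := by
  classical
  rw [initialForm, coeff_sum]
  simp only [coeff_monomial]
  rw [Finset.sum_ite_eq']
  simp only [Finset.mem_filter, mem_support_iff]
  split_ifs with h1 h2 h2
  · rfl
  · exact absurd h1.2 h2
  · by_contra h
    exact h1 ⟨fun h' => h h'.symm, h2⟩
  · rfl

variable (w : Fin n → ℕ)

lemma wdeg_add (m m' : Fin n →₀ ℕ) : wdeg n w (m + m') = wdeg n w m + wdeg n w m' := by
  simp [wdeg, mul_add, Finset.sum_add_distrib]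

lemma wdeg_single (i : Fin n) : wdeg n w (Finsupp.single i 1) = w i := by
  classical
  simp [wdeg, Finsupp.single_apply]

/-- `f` is a lead witness in bidegree `(c, d)` for `g`. -/
def Wit (c d : ℕ) (g f : PS K n) : Prop :=
  (∀ m, coeff m f ≠ 0 → m.degree = d ∧ wdeg n w m ≤ c) ∧
  ∀ m, m.degree = d → wdeg n w m = c → coeff m f = coeff m g

/-- The ideal of elements with lead witnesses. -/
def witIdeal (I : Ideal (PS K n)) : Ideal (PS K n) where
  carrier := {g | ∀ c d, ∃ f ∈ I, Wit w c d g f}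
  zero_mem' := fun c d => ⟨0, zero_mem _, by simp, by simp⟩
  add_mem' := by
    intro a b ha hb c d
    obtain ⟨f, hf, hf1, hf2⟩ := ha c d
    obtain ⟨g, hg, hg1, hg2⟩ := hb c d
    refine ⟨f + g, add_mem hf hg, fun m hm => ?_, fun m h1 h2 => ?_⟩
    · by_cases h : coeff m f = 0
      · apply hg1
        intro h'
        apply hm
        rw [coeff_add, h, h', add_zero]
      · exact hf1 m h
    · rw [coeff_add, coeff_add, hf2 m h1 h2, hg2 m h1 h2]
  smul_mem' := by
    intro p g hg
    induction p using MvPolynomial.induction_on generalizing g with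
    | C a =>
      intro c d
      obtain ⟨f, hf, hf1, hf2⟩ := hg c d
      refine ⟨C a * f, Ideal.mul_mem_left _ _ hf, fun m hm => ?_, fun m h1 h2 => ?_⟩
      · rw [coeff_C_mul] at hm
        exact hf1 m (right_ne_zero_of_mul hm)
      · rw [smul_eq_mul, coeff_C_mul, coeff_C_mul, hf2 m h1 h2]
    | add p q hp hq =>
      intro c d
      obtain ⟨f, hf, hf1, hf2⟩ := hp hg c d
      obtain ⟨f', hf', hg1, hg2⟩ := hq hg c d
      refine ⟨f + f', add_mem hf hf', fun m hm => ?_, fun m h1 h2 => ?_⟩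
      · by_cases h : coeff m f = 0
        · apply hg1
          intro h'
          apply hm
          rw [coeff_add, h, h', add_zero]
        · exact hf1 m h
      · rw [add_smul, coeff_add, coeff_add, hf2 m h1 h2, hg2 m h1 h2]
    | mul_X p i hp =>
      rw [mul_smul]
      refine hp ?_
      intro c d
      have hdec : ∀ m : Fin n →₀ ℕ, i ∈ m.support →
          (m - Finsupp.single i 1).degree + 1 = m.degree ∧
          wdeg n w (m - Finsupp.single i 1) + w i = wdeg n w m := by
        intro m hm
        have h : m - Finsupp.single i 1 + Finsupp.single i 1 = m := by
          apply tsub_add_cancel_of_le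
          rw [Finsupp.single_le_iff]
          exact Nat.one_le_iff_ne_zero.2 (Finsupp.mem_support_iff.1 hm)
        constructor
        · conv_rhs => rw [← h]
          rw [map_add, Finsupp.degree_single]
        · conv_rhs => rw [← h]
          rw [wdeg_add, wdeg_single]
      by_cases hcd : w i ≤ c ∧ 1 ≤ d
      · obtain ⟨f, hf, hf1, hf2⟩ := hg (c - w i) (d - 1)
        refine ⟨f * X i, Ideal.mul_mem_right _ _ hf, fun m hm => ?_, fun m h1 h2 => ?_⟩
        · rw [coeff_mul_X'] at hm
          split_ifs at hm with hi
          · have := hf1 _ hm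
            have := hdec m hi
            omega
          · exact absurd rfl hm
        · rw [smul_eq_mul, mul_comm (X i), coeff_mul_X', coeff_mul_X']
          split_ifs with hi
          · have := hdec m hi
            exact hf2 _ (by omega) (by omega)
          · rfl
      · refine ⟨0, zero_mem _, by simp, fun m h1 h2 => ?_⟩
        rw [smul_eq_mul, mul_comm (X i), coeff_mul_X', coeff_zero]
        split_ifs with hi
        · have := hdec m hi
          exfalso; omega
        · rfl

lemma sum_filt (g : PS K n) : g = ∑ x ∈ g.support.image (fun m => (wdeg n w m, m.degree)),
    filt (fun m => wdeg n w m = x.1 ∧ m.degree = x.2) g := by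
  classical
  ext m
  rw [coeff_sum]
  simp only [coeff_filt]
  by_cases h : coeff m g = 0
  · simp [h]
  · rw [Finset.sum_eq_single (wdeg n w m, m.degree)]
    · simp
    · rintro ⟨a, b⟩ _ hne
      rw [if_neg]
      rintro ⟨rfl, rfl⟩
      exact hne rfl
    · intro h'
      exact absurd (Finset.mem_image_of_mem _ (mem_support_iff.2 h)) h'

lemma initialIdealW_eq {I : Ideal (PS K n)} (hI : IsHomog K n I) :
    initialIdealW K n w I = witIdeal w I := by
  apply le_antisymm
  · rw [initialIdealW, Ideal.span_le]
    rintro _ ⟨f, hf, rfl⟩ c d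
    by_cases hc : c = f.support.sup (wdeg n w)
    · refine ⟨homogeneousComponent d f, hI f hf d, fun m hm => ?_, fun m h1 h2 => ?_⟩
      · rw [coeff_homogeneousComponent] at hm
        split_ifs at hm with h
        · refine ⟨h, ?_⟩
          rw [hc]
          exact Finset.le_sup (mem_support_iff.2 hm)
        · exact absurd rfl hm
      · rw [coeff_homogeneousComponent, if_pos h1, coeff_initialForm, if_pos (h2.trans hc)]
    · refine ⟨0, zero_mem _, by simp, fun m h1 h2 => ?_⟩
      rw [coeff_initialForm, if_neg, coeff_zero]
      rw [h2]; exact hc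
  · intro g hg
    rw [sum_filt w g]
    refine Ideal.sum_mem _ fun x _ => ?_
    obtain ⟨f, hf, hf1, hf2⟩ := hg x.1 x.2
    by_cases h0 : filt (fun m => wdeg n w m = x.1 ∧ m.degree = x.2) g = 0
    · rw [h0]; exact zero_mem _
    apply Ideal.subset_span
    refine ⟨f, hf, ?_⟩
    obtain ⟨m0, hm0⟩ := MvPolynomial.ne_zero_iff.1 h0
    rw [coeff_filt] at hm0
    split_ifs at hm0 with hm
    swap
    · exact absurd rfl hm0
    have hsup : f.support.sup (wdeg n w) = x.1 := by
      apply le_antisymm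
      · exact Finset.sup_le fun m hm => (hf1 m (mem_support_iff.1 hm)).2
      · rw [← hm.1]
        apply Finset.le_sup
        rw [mem_support_iff, hf2 m0 hm.2 hm.1]
        exact hm0
    ext m
    rw [coeff_filt, coeff_initialForm, hsup]
    by_cases h1 : wdeg n w m = x.1
    · rw [if_pos h1]
      by_cases h2 : m.degree = x.2
      · rw [if_pos ⟨h1, h2⟩, hf2 m h2 h1]
      · rw [if_neg (fun h => h2 h.2)]
        by_contra h
        exact h2 (hf1 m (Ne.symm h)).1
    · rw [if_neg h1, if_neg (fun h => h1 h.1)]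

lemma initialIdealW_homog {I : Ideal (PS K n)} (hI : IsHomog K n I) :
    IsHomog K n (initialIdealW K n w I) := by
  rw [initialIdealW_eq w hI]
  intro g hg d c d'
  by_cases hd : d' = d
  · obtain ⟨f, hf, hf1, hf2⟩ := hg c d'
    refine ⟨f, hf, hf1, fun m h1 h2 => ?_⟩
    rw [hf2 m h1 h2, coeff_homogeneousComponent, if_pos (h1.trans hd)]
  · refine ⟨0, zero_mem _, by simp, fun m h1 h2 => ?_⟩
    rw [coeff_homogeneousComponent, if_neg (by rw [h1]; exact hd), coeff_zero]

/-- Polynomials supported on a set of exponents. -/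
def suppSub (s : Set (Fin n →₀ ℕ)) : Submodule K (PS K n) where
  carrier := {f | ∀ m, coeff m f ≠ 0 → m ∈ s}
  zero_mem' := by intro m hm; simp at hm
  add_mem' := by
    intro f g hf hg m hm
    by_cases h : coeff m f = 0
    · apply hg
      intro h'
      apply hm
      rw [coeff_add, h, h', add_zero]
    · exact hf m h
  smul_mem' := by
    intro c f hf m hm
    rw [coeff_smul, smul_eq_mul] at hm
    exact hf m (right_ne_zero_of_mul hm)

lemma filt_mem_suppSub {s : Set (Fin n →₀ ℕ)} {f : PS K n} (hf : f ∈ suppSub s)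
    (p : (Fin n →₀ ℕ) → Prop) : filt p f ∈ suppSub s := by
  intro m hm
  rw [coeff_filt] at hm
  split_ifs at hm with h
  · exact hf m hm
  · exact absurd rfl hm

lemma exists_compl (I' : Ideal (PS K n)) : ∃ s : Set (Fin n →₀ ℕ),
    (∀ f ∈ suppSub s, f ∈ I' → f = 0) ∧ ∀ f : PS K n, ∃ b ∈ suppSub s, f - b ∈ I' := by
  obtain ⟨κ, a, ha, hsp, hli⟩ := exists_linearIndependent' K
    (fun m : Fin n →₀ ℕ => qmk I' (monomial m 1))
  refine ⟨Set.range a, ?_, ?_⟩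
  · intro f hf hfI
    let c : κ →₀ K := Finsupp.comapDomain a (Finsupp.onFinset f.support (fun m => coeff m f)
      (fun m hm => mem_support_iff.2 hm)) ha.injOn
    have hc : ∀ k, c k = coeff (a k) f := fun k => rfl
    have h1 : f = Finsupp.linearCombination K (fun k => (monomial (a k) 1 : PS K n)) c := by
      ext m
      rw [Finsupp.linearCombination_apply, Finsupp.sum, coeff_sum]
      simp only [coeff_smul, coeff_monomial, smul_eq_mul, mul_ite, mul_one, mul_zero]
      by_cases hm : m ∈ Set.range a
      · obtain ⟨k, rfl⟩ := hm
        rw [Finset.sum_eq_single k]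
        · rw [if_pos rfl, hc]
        · intro k' _ hk
          rw [if_neg (fun h => hk (ha h))]
        · intro hk
          rw [if_pos rfl]
          exact Finsupp.notMem_support_iff.1 hk
      · rw [Finset.sum_eq_zero]
        · by_contra h
          exact hm (hf m h)
        · intro k _
          rw [if_neg]
          rintro rfl
          exact hm ⟨k, rfl⟩
    have h2 : Finsupp.linearCombination K
        ((fun m : Fin n →₀ ℕ => qmk I' (monomial m 1)) ∘ a) c = 0 := by
      have : qmk I' f = 0 := by
        have : f ∈ LinearMap.ker (qmk I') := by rw [ker_qmk]; exact hfI
        exact this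
      rw [h1, Finsupp.linearCombination_apply, map_finsuppSum] at this
      rw [← this, Finsupp.linearCombination_apply]
      simp only [map_smul, Function.comp_apply]
    have := (linearIndependent_iff.1 hli) c h2
    rw [h1, this, map_zero]
  · intro f
    have hf : qmk I' f ∈ Submodule.span K (Set.range ((fun m : Fin n →₀ ℕ =>
        qmk I' (monomial m 1)) ∘ a)) := by
      rw [hsp, f.as_sum, map_sum]
      refine Submodule.sum_mem _ fun m _ => ?_
      have : (monomial m (coeff m f) : PS K n) = coeff m f • monomial m 1 := by
        rw [smul_monomial, smul_eq_mul, mul_one]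
      rw [this, map_smul]
      exact Submodule.smul_mem _ _ (Submodule.subset_span ⟨m, rfl⟩)
    have hle : Submodule.span K (Set.range ((fun m : Fin n →₀ ℕ =>
        qmk I' (monomial m 1)) ∘ a)) ≤ (suppSub (Set.range a)).map (qmk I') := by
      rw [Submodule.span_le]
      rintro _ ⟨k, rfl⟩
      refine ⟨monomial (a k) 1, fun m hm => ?_, rfl⟩
      rw [coeff_monomial] at hm
      split_ifs at hm with h
      · exact ⟨k, h⟩
      · exact absurd rfl hm
    obtain ⟨b, hb, hbf⟩ := hle hf
    refine ⟨b, hb, ?_⟩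
    have : f - b ∈ LinearMap.ker (qmk I') := by
      rw [LinearMap.mem_ker, map_sub, hbf, sub_self]
    rw [ker_qmk] at this
    exact this

lemma qIso_initial {I : Ideal (PS K n)} (hI : IsHomog K n I) :
    QIso I (initialIdealW K n w I) := by
  obtain ⟨s, h0, h1⟩ := exists_compl (initialIdealW K n w I)
  refine qIso_of_compl hI (initialIdealW_homog w hI) (suppSub s) ?_ ?_ ?_ h0 h1
  · intro f hf d m hm
    rw [coeff_homogeneousComponent] at hm
    split_ifs at hm with h
    · exact hf m hm
    · exact absurd rfl hm
  · intro f hf hfI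
    have h2 : initialForm K n w f = 0 := by
      apply h0
      · intro m hm
        rw [coeff_initialForm] at hm
        split_ifs at hm with h
        · exact hf m hm
        · exact absurd rfl hm
      · exact Ideal.subset_span ⟨f, hfI, rfl⟩
    by_contra hne
    obtain ⟨m, hm, hms⟩ := Finset.exists_mem_eq_sup f.support
      (by rwa [Finset.nonempty_iff_ne_empty, Ne, support_eq_empty]) (wdeg n w)
    have := congrArg (coeff m) h2
    rw [coeff_initialForm, if_pos hms.symm, coeff_zero] at this
    exact mem_support_iff.1 hm this
  · have key : ∀ c : ℕ, ∀ m : Fin n →₀ ℕ, wdeg n w m = c →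
        (monomial m 1 : PS K n) ∈ suppSub s ⊔ I.restrictScalars K := by
      intro c
      induction c using Nat.strong_induction_on with
      | _ c ih =>
        intro m hm
        obtain ⟨b, hb, hg⟩ := h1 (monomial m 1)
        rw [initialIdealW_eq w hI] at hg
        obtain ⟨f, hf, hf1, hf2⟩ := hg c m.degree
        set b' := filt (fun m' => wdeg n w m' = c ∧ m'.degree = m.degree) b with hb'
        have hrem : monomial m 1 - b' - f ∈ suppSub s ⊔ I.restrictScalars K := by
          rw [MvPolynomial.as_sum (monomial m 1 - b' - f : PS K n)]
          refine Submodule.sum_mem _ fun m' hm' => ?_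
          have e : (monomial m' (coeff m' (monomial m 1 - b' - f)) : PS K n) =
              coeff m' (monomial m 1 - b' - f) • monomial m' 1 := by
            rw [smul_monomial, smul_eq_mul, mul_one]
          rw [e]
          refine Submodule.smul_mem _ _ (ih (wdeg n w m') ?_ m' rfl)
          by_contra hlt
          apply mem_support_iff.1 hm'
          have hf' : ¬ (m'.degree = m.degree ∧ wdeg n w m' = c) → coeff m' f = 0 := by
            intro h
            by_contra h'
            have := hf1 m' h'
            exact h ⟨this.1, by omega⟩
          rw [coeff_sub, coeff_sub, hb', coeff_filt]
          by_cases hc : m'.degree = m.degree ∧ wdeg n w m' = c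
          · rw [if_pos hc.symm, hf2 m' hc.1 hc.2, coeff_sub, sub_self]
          · rw [if_neg (fun h => hc h.symm), hf' hc, coeff_monomial, if_neg, sub_zero, sub_zero]
            rintro rfl
            exact hc ⟨rfl, hm⟩
        have : (monomial m 1 : PS K n) = (monomial m 1 - b' - f) + (b' + f) := by ring
        rw [this]
        exact add_mem hrem (Submodule.add_mem_sup (filt_mem_suppSub hb _) hf)
    intro f
    have hf : f ∈ suppSub s ⊔ I.restrictScalars K := by
      rw [f.as_sum]
      refine Submodule.sum_mem _ fun m _ => ?_
      have : (monomial m (coeff m f) : PS K n) = coeff m f • monomial m 1 := by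
        rw [smul_monomial, smul_eq_mul, mul_one]
      rw [this]
      exact Submodule.smul_mem _ _ (key _ m rfl)
    obtain ⟨b, hb, g, hg, rfl⟩ := Submodule.mem_sup.1 hf
    exact ⟨b, hb, by rw [add_sub_cancel_left]; exact hg⟩

end initial


end Part8x


section Part9x

section torus

variable {K n}

/-- Diagonal matrix `λ^{-w}`. -/
def dg (w : Fin n → ℕ) (l : Kˣ) : GL (Fin n) K where
  val := Matrix.diagonal (fun i => ((l⁻¹ : Kˣ) : K) ^ w i)
  inv := Matrix.diagonal (fun i => (l : K) ^ w i)
  val_inv := by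
    rw [Matrix.diagonal_mul_diagonal, ← Matrix.diagonal_one]
    congr 1
    funext i
    rw [← mul_pow, Units.inv_mul, one_pow]
  inv_val := by
    rw [Matrix.diagonal_mul_diagonal, ← Matrix.diagonal_one]
    congr 1
    funext i
    rw [← mul_pow, Units.mul_inv, one_pow]

lemma dg_monomial (w : Fin n → ℕ) (l : Kˣ) (m : Fin n →₀ ℕ) (a : K) :
    coordChange K n (dg w l) (monomial m a) = (((l⁻¹ : Kˣ) : K) ^ wdeg n w m) • monomial m a := by
  have hX : ∀ i, coordChange K n (dg w l) (X i) = C (((l⁻¹ : Kˣ) : K) ^ w i) * X i := by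
    intro i
    rw [coordChange_X]
    have : ((dg w l : GL (Fin n) K) : Matrix (Fin n) (Fin n) K) =
      Matrix.diagonal (fun i => ((l⁻¹ : Kˣ) : K) ^ w i) := rfl
    rw [this]
    simp only [Matrix.diagonal_apply, ite_smul, zero_smul]
    rw [Finset.sum_ite_eq' Finset.univ i]
    simp [smul_eq_C_mul]
  have hC : coordChange K n (dg w l) (C a) = C a := (coordChange K n (dg w l)).commutes a
  rw [monomial_eq, map_mul, hC, Finsupp.prod_fintype _ _ (by simp), map_prod, smul_eq_C_mul]
  simp only [map_pow, hX, mul_pow, Finset.prod_mul_distrib]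
  have : ∏ i, (C (((l⁻¹ : Kˣ) : K)) ^ w i) ^ m i = (C (((l⁻¹ : Kˣ) : K)) : PS K n) ^ wdeg n w m := by
    simp only [← pow_mul]
    rw [Finset.prod_pow_eq_pow_sum]; rfl
  rw [this]
  ring

open Classical in
/-- The torus family. -/
def torI (w : Fin n → ℕ) (I : Ideal (PS K n)) (l : K) : Ideal (PS K n) :=
  if h : l = 0 then initialIdealW K n w I else gI (dg w (Units.mk0 l h)) I

lemma torI_zero (w : Fin n → ℕ) (I : Ideal (PS K n)) : torI w I 0 = initialIdealW K n w I := by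
  simp [torI]

lemma torI_ne (w : Fin n → ℕ) (I : Ideal (PS K n)) {l : K} (h : l ≠ 0) :
    torI w I l = gI (dg w (Units.mk0 l h)) I := by
  simp [torI, h]

lemma torI_homog (w : Fin n → ℕ) {I : Ideal (PS K n)} (hI : IsHomog K n I) (l : K) :
    IsHomog K n (torI w I l) := by
  by_cases h : l = 0
  · subst h; rw [torI_zero]; exact initialIdealW_homog w hI
  · rw [torI_ne w I h]; exact gI_homog _ hI

lemma torI_qIso (w : Fin n → ℕ) {I : Ideal (PS K n)} (hI : IsHomog K n I) (l : K) :
    QIso (torI w I l) (torI w I 0) := by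
  have h1 : QIso I (torI w I 0) := by rw [torI_zero]; exact qIso_initial w hI
  refine QIso.trans ?_ h1
  by_cases h : l = 0
  · subst h; exact h1.symm
  · rw [torI_ne w I h]; exact (qIso_gI _ I).symm

/-- Polynomial functions in one variable. -/
def PK (K : Type) [Field K] : Subalgebra K (K → K) :=
  (Polynomial.aeval (R := K) (id : K → K)).range

lemma mem_PK {F : K → K} (hF : F ∈ PK K) : ∃ p : Polynomial K, ∀ l, F l = p.eval l := by
  rw [PK, AlgHom.mem_range] at hF
  obtain ⟨p, rfl⟩ := hF
  refine ⟨p, fun l => ?_⟩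
  induction p using Polynomial.induction_on' with
  | add p q hp hq => simp only [map_add, Pi.add_apply, hp, hq, Polynomial.eval_add]
  | monomial k a => simp [Polynomial.aeval_monomial]

lemma pow_mem_PK (k : ℕ) : (fun l : K => l ^ k) ∈ PK K := by
  have h : (id : K → K) ∈ PK K := by
    rw [PK]
    have := AlgHom.mem_range_self (Polynomial.aeval (R := K) (id : K → K)) Polynomial.X
    rwa [Polynomial.aeval_X] at this
  exact Subalgebra.pow_mem _ h k

/-- The polynomial section. -/
def tsec (w : Fin n → ℕ) (c : ℕ) (f : PS K n) (l : K) : PS K n :=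
  ∑ m ∈ f.support, l ^ (c - wdeg n w m) • monomial m (coeff m f)

lemma tsec_WP (w : Fin n → ℕ) (c : ℕ) (f : PS K n) : WP (PK K) (tsec w c f) := by
  intro φ
  have : (fun l => φ (tsec w c f l)) = ∑ m ∈ f.support,
      φ (monomial m (coeff m f)) • (fun l : K => l ^ (c - wdeg n w m)) := by
    funext l
    rw [tsec, map_sum, Finset.sum_apply]
    refine Finset.sum_congr rfl fun m _ => ?_
    simp only [map_smul, Pi.smul_apply, smul_eq_mul]
    rw [mul_comm]
  rw [this]
  exact Subalgebra.sum_mem _ fun m _ => Subalgebra.smul_mem _ (pow_mem_PK _) _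

lemma coeff_tsec (w : Fin n → ℕ) (c : ℕ) (f : PS K n) (l : K) (m : Fin n →₀ ℕ) :
    coeff m (tsec w c f l) = l ^ (c - wdeg n w m) * coeff m f := by
  classical
  rw [tsec, coeff_sum]
  simp only [coeff_smul, coeff_monomial, smul_eq_mul, mul_ite, mul_zero]
  rw [Finset.sum_ite_eq']
  split_ifs with h
  · rfl
  · rw [notMem_support_iff.1 h, mul_zero]

lemma tsec_ne (w : Fin n → ℕ) (c : ℕ) (f : PS K n) (hf : ∀ m, coeff m f ≠ 0 → wdeg n w m ≤ c)
    {l : K} (h : l ≠ 0) :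
    tsec w c f l = l ^ c • coordChange K n (dg w (Units.mk0 l h)) f := by
  conv_rhs => rw [f.as_sum]
  rw [map_sum, Finset.smul_sum, tsec]
  refine Finset.sum_congr rfl fun m hm => ?_
  rw [dg_monomial, smul_smul]
  congr 1
  have := hf m (mem_support_iff.1 hm)
  rw [Units.val_inv_eq_inv_val, Units.val_mk0, inv_pow, pow_sub₀ l h this]

lemma torI_ext (w : Fin n → ℕ) {I : Ideal (PS K n)} (hI : IsHomog K n I) (d : ℤ) :
    ExtP (PK K) (fun l => igr (torI w I l) d) 0 := by
  rintro x ⟨hx, hxd⟩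
  have hx' : x ∈ torI w I 0 := hx
  change x ∈ polyGrade K n d at hxd
  rw [torI_zero, initialIdealW_eq w hI] at hx'
  rw [sum_filt w x]
  refine Submodule.sum_mem _ fun y hy => ?_
  obtain ⟨m0, hm0, rfl⟩ := Finset.mem_image.1 hy
  have hd : (m0.degree : ℤ) = d := mem_polyGrade_iff.1 hxd m0 hm0
  obtain ⟨f, hf, hf1, hf2⟩ := hx' (wdeg n w m0) m0.degree
  have hv0 : tsec w (wdeg n w m0) f 0 =
      filt (fun m => wdeg n w m = wdeg n w m0 ∧ m.degree = m0.degree) x := by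
    ext m
    rw [coeff_tsec, coeff_filt]
    by_cases h : coeff m f = 0
    · rw [h, mul_zero]
      split_ifs with h'
      · rw [← hf2 m h'.2 h'.1, h]
      · rfl
    · obtain ⟨h1, h2⟩ := hf1 m h
      by_cases h3 : wdeg n w m = wdeg n w m0
      · rw [if_pos ⟨h3, h1⟩, ← hf2 m h1 h3, h3, Nat.sub_self, pow_zero, one_mul]
      · rw [if_neg (fun h => h3 h.1), zero_pow (by omega), zero_mul]
  have hfd : f ∈ polyGrade K n d := mem_polyGrade_iff.2 fun m hm => by
    rw [(hf1 m (mem_support_iff.1 hm)).1, hd]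
  refine ⟨tsec w (wdeg n w m0) f, tsec_WP _ _ _, hv0, fun l => ⟨?_, ?_⟩⟩
  · change _ ∈ torI w I l
    by_cases h : l = 0
    · subst h
      rw [hv0, torI_zero, initialIdealW_eq w hI]
      intro c d'
      by_cases hcd : c = wdeg n w m0 ∧ d' = m0.degree
      · obtain ⟨rfl, rfl⟩ := hcd
        refine ⟨f, hf, hf1, fun m h1 h2 => ?_⟩
        rw [coeff_filt, if_pos ⟨h2, h1⟩, hf2 m h1 h2]
      · refine ⟨0, zero_mem _, by simp, fun m h1 h2 => ?_⟩
        rw [coeff_filt, if_neg, coeff_zero]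
        rintro ⟨h3, h4⟩
        exact hcd ⟨by omega, by omega⟩
    · rw [tsec_ne w _ f (fun m hm => (hf1 m hm).2) h, torI_ne w I h, smul_eq_C_mul]
      apply Ideal.mul_mem_left
      rw [mem_gI, coordChange_inv_apply]
      exact hf
  · refine mem_polyGrade_iff.2 fun m hm => ?_
    rw [mem_support_iff, coeff_tsec] at hm
    exact mem_polyGrade_iff.1 hfd m (mem_support_iff.2 (right_ne_zero_of_mul hm))

lemma torus_le [Infinite K] (w w' : Fin n → ℕ) {I J : Ideal (PS K n)} (hI : IsHomog K n I)
    (hJ : IsHomog K n J) (i : ℕ) (j : ℤ) : ∃ g0 : GL (Fin n) K,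
    torQQ K n I (gI g0 J) i j ≤
      torQQ K n (initialIdealW K n w I) (initialIdealW K n w' J) i j := by
  obtain ⟨F, hF, hF0, h⟩ := family_le (P := PK K) (I := torI w I) (J := torI w' J) (t0 := 0)
    (torI_homog w hI) (torI_homog w' hJ) (torI_qIso w hI) (torI_qIso w' hJ)
    (torI_ext w hI) (torI_ext w' hJ) i j
  obtain ⟨p, hp⟩ := mem_PK hF
  have hp0 : p ≠ 0 := by
    rintro rfl
    exact hF0 (by rw [hp, Polynomial.eval_zero])
  obtain ⟨l, hl⟩ : ∃ l : K, (p * Polynomial.X).eval l ≠ 0 := by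
    by_contra hcon
    push Not at hcon
    exact mul_ne_zero hp0 Polynomial.X_ne_zero (Polynomial.funext fun l => by
      rw [hcon l, Polynomial.eval_zero])
  rw [Polynomial.eval_mul, Polynomial.eval_X] at hl
  have hl0 : l ≠ 0 := right_ne_zero_of_mul hl
  have hle := h l (by rw [hp]; exact left_ne_zero_of_mul hl)
  rw [torI_zero, torI_zero, torI_ne w I hl0, torI_ne w' J hl0] at hle
  set a := dg w (Units.mk0 l hl0)
  set b := dg w' (Units.mk0 l hl0)
  refine ⟨a⁻¹ * b, ?_⟩
  rw [← torQQ_gI a, ← gI_mul, mul_inv_cancel_left]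
  exact hle

end torus


end Part9x

/-- **Proposition 2.6(i)** (Caviglia–Murai): fix `j`, homogeneous ideals `I, J ⊆ S` and
weights `w, w' ∈ ℤ_{≥0}^n`.  For a general change of coordinates `g ∈ GL_n(K)`,
`dim_K Tor_i(S/I, S/g(J))_j ≤ dim_K Tor_i(S/in_w(I), S/in_{w'}(J))_j` for all `i`. -/
theorem tor_dim_general_le_initial_weights_quotients [Infinite K] (j : ℤ)
    (w w' : Fin n → ℕ) (I J : Ideal (PS K n)) (hI : IsHomog K n I) (hJ : IsHomog K n J) :
    generally K n (fun g => ∀ i : ℕ,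
      torQQ K n I (Ideal.map (coordChange K n g) J) i j ≤
        torQQ K n (initialIdealW K n w I) (initialIdealW K n w' J) i j) := by
  have H : ∀ i : ℕ, ∃ F : MvPolynomial (Fin n × Fin n) K, F ≠ 0 ∧ ∀ g : GL (Fin n) K,
      eval (fun p => (g : Matrix (Fin n) (Fin n) K) p.1 p.2) F ≠ 0 →
      torQQ K n I (gI g J) i j ≤
        torQQ K n (initialIdealW K n w I) (initialIdealW K n w' J) i j := by
    intro i
    obtain ⟨g0, hg0⟩ := torus_le w w' hI hJ i j
    obtain ⟨F, hF, h⟩ := GL_le hI hJ g0 i j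
    exact ⟨F, hF, fun g hg => (h g hg).trans hg0⟩
  choose F hF h using H
  refine ⟨∏ i ∈ Finset.range (j.toNat + 1), F i,
    Finset.prod_ne_zero_iff.2 fun i _ => hF i, fun g hg i => ?_⟩
  by_cases hij : j < i
  · change torQQ K n I (gI g J) i j ≤ _
    rw [torQQ_eq_zero I (gI g J) i j hij]
    exact Nat.zero_le _
  · refine h i g ?_
    rw [map_prod, Finset.prod_ne_zero_iff] at hg
    exact hg i (Finset.mem_range.2 (by omega))

end
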